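/- arXiv:2302.08879 — 7 statements merged into one kernel-verified Lean document; each statement's English description precedes it below -/
import Mathlib

section
/- Let Φ = (φ_n)_{n∈N} be an ETF of N vectors in a complex inner product space spanning a subspace of dimension D with D < N, scaled so that |⟨φ_{n₁}, φ_{n₂}⟩| = 1 for all n₁ ≠ n₂, and let Ψ = (ψ_n)_{n∈N} be a dual of Φ. Suppose (N,(K_b)_{b∈B}) is a BIBD every block K_b of which belongs to bin(Φ). Then every member L of bin(Ψ) is an oval of this BIBD: L is nonempty and #(K_b ∩ L) ∈ {0, 2} for every b ∈ B. -/
open scoped BigOperators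

noncomputable section

/-- A finite family of vectors in an inner product space over `𝕜` is an
equiangular tight frame (ETF): equal norms, equal modulus of cross inner
products, and tightness (the Gram matrix `G` satisfies `G² = A·G`). -/
def IsETF (𝕜 : Type*) {E ι : Type*} [RCLike 𝕜] [NormedAddCommGroup E]
    [InnerProductSpace 𝕜 E] [Fintype ι] (φ : ι → E) : Prop :=
  (∃ S : ℝ, 0 < S ∧ ∀ n, (inner 𝕜 (φ n) (φ n) : 𝕜) = (S : 𝕜)) ∧
  (∃ C : ℝ, 0 < C ∧ ∀ n₁ n₂, n₁ ≠ n₂ → ‖(inner 𝕜 (φ n₁) (φ n₂) : 𝕜)‖ = C) ∧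
  (∃ A : ℝ, 0 < A ∧ ∀ n₁ n₃,
      (∑ n₂, (inner 𝕜 (φ n₁) (φ n₂) : 𝕜) * (inner 𝕜 (φ n₂) (φ n₃) : 𝕜)) =
        (A : 𝕜) * (inner 𝕜 (φ n₁) (φ n₃) : 𝕜))

/-- The subfamily of `φ` indexed by the finite set `K` is a regular simplex:
it is an ETF whose span has dimension one less than its number of vectors. -/
def IsRegularSimplex (𝕜 : Type*) {E ι : Type*} [RCLike 𝕜] [NormedAddCommGroup E]
    [InnerProductSpace 𝕜 E] [Fintype ι] (φ : ι → E) (K : Finset ι) : Prop :=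
  IsETF 𝕜 (fun k : K => φ k.1) ∧
  Module.finrank 𝕜 (Submodule.span 𝕜 (φ '' (K : Set ι))) + 1 = K.card

/-- The binder of a family: all index sets whose corresponding subfamily is a
regular simplex. -/
def binder (𝕜 : Type*) {E ι : Type*} [RCLike 𝕜] [NormedAddCommGroup E]
    [InnerProductSpace 𝕜 E] [Fintype ι] (φ : ι → E) : Set (Finset ι) :=
  {K | IsRegularSimplex 𝕜 φ K}

/-- Trace identity `A * D = N * S` for a tight family. -/
theorem etf_trace {E κ : Type*} [NormedAddCommGroup E] [InnerProductSpace ℂ E] [Fintype κ]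
    (v : κ → E) (S A : ℝ) (hS : ∀ n, (inner ℂ (v n) (v n) : ℂ) = (S : ℂ))
    (hA : ∀ n₁ n₃, (∑ n₂, (inner ℂ (v n₁) (v n₂) : ℂ) * (inner ℂ (v n₂) (v n₃) : ℂ)) =
        (A : ℂ) * (inner ℂ (v n₁) (v n₃) : ℂ)) :
    A * (Module.finrank ℂ (Submodule.span ℂ (Set.range v)) : ℝ) = Fintype.card κ * S := by
  classical
  set W := Submodule.span ℂ (Set.range v) with hW
  let w : κ → W := fun n => ⟨v n, Submodule.subset_span ⟨n, rfl⟩⟩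
  have : FiniteDimensional ℂ W := FiniteDimensional.span_of_finite ℂ (Set.finite_range v)
  let f : (κ → ℂ) →ₗ[ℂ] W := Fintype.linearCombination ℂ w
  let g : W →ₗ[ℂ] (κ → ℂ) := LinearMap.pi (fun n => (innerₛₗ ℂ (w n)))
  have hspan : Submodule.span ℂ (Set.range w) = ⊤ := by
    have := Submodule.span_span_coe_preimage (R := ℂ) (s := Set.range v)
    convert this using 2
    ext x
    constructor
    · rintro ⟨n, rfl⟩; exact ⟨n, rfl⟩
    · rintro ⟨n, hn⟩; exact ⟨n, Subtype.ext hn⟩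
  have hw : ∀ n m, (inner ℂ (w n) (w m) : ℂ) = inner ℂ (v n) (v m) := fun n m => rfl
  have hfg : f ∘ₗ g = (A : ℂ) • LinearMap.id := by
    apply LinearMap.ext_on_range hspan
    intro m
    rw [← sub_eq_zero]
    have key : ∀ x : W, (inner ℂ x ((f ∘ₗ g) (w m) - ((A : ℂ) • LinearMap.id : W →ₗ[ℂ] W) (w m)) : ℂ) = 0 := by
      intro x
      have hx : x ∈ Submodule.span ℂ (Set.range w) := by rw [hspan]; trivial
      induction hx using Submodule.span_induction with
      | mem x hx =>
        obtain ⟨k, rfl⟩ := hx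
        simp only [f, g, LinearMap.comp_apply, Fintype.linearCombination_apply, LinearMap.pi_apply,
          innerₛₗ_apply_apply, inner_sub_right, inner_sum, inner_smul_right, LinearMap.smul_apply,
          LinearMap.id_apply, hw]
        rw [← hA k m, sub_eq_zero]
        exact Finset.sum_congr rfl fun i _ => mul_comm _ _
      | zero => simp
      | add x y _ _ hx hy => rw [inner_add_left, hx, hy, add_zero]
      | smul a x _ hx => rw [inner_smul_left, hx, mul_zero]
    exact inner_self_eq_zero.mp (key _)
  have h1 : LinearMap.trace ℂ W (f ∘ₗ g) = (A : ℂ) * (Module.finrank ℂ W : ℂ) := by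
    rw [hfg, map_smul, LinearMap.trace_id, smul_eq_mul]
  have h2 : LinearMap.trace ℂ (κ → ℂ) (g ∘ₗ f) = (Fintype.card κ : ℂ) * (S : ℂ) := by
    rw [LinearMap.trace_eq_matrix_trace ℂ (Pi.basisFun ℂ κ), Matrix.trace]
    have : ∀ i, (LinearMap.toMatrix (Pi.basisFun ℂ κ) (Pi.basisFun ℂ κ) (g ∘ₗ f)).diag i = (S : ℂ) := by
      intro i
      rw [Matrix.diag_apply, LinearMap.toMatrix_apply]
      have e : f (Pi.single i 1) = w i := by
        simp [f, Fintype.linearCombination_apply_single]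
      simp only [Pi.basisFun_apply, LinearMap.comp_apply, e, Pi.basisFun_repr]
      exact hS i
    rw [Finset.sum_congr rfl (fun i _ => this i), Finset.sum_const, nsmul_eq_mul, Finset.card_univ]
  rw [LinearMap.trace_comp_comm', h2] at h1
  exact_mod_cast h1.symm

/-- Diagonal entry of `G² = A G`. -/
theorem etf_diag {E κ : Type*} [NormedAddCommGroup E] [InnerProductSpace ℂ E] [Fintype κ]
    (v : κ → E) (S A : ℝ) (hS : ∀ n, (inner ℂ (v n) (v n) : ℂ) = (S : ℂ))
    (hC : ∀ n₁ n₂, n₁ ≠ n₂ → ‖(inner ℂ (v n₁) (v n₂) : ℂ)‖ = 1)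
    (hA : ∀ n₁ n₃, (∑ n₂, (inner ℂ (v n₁) (v n₂) : ℂ) * (inner ℂ (v n₂) (v n₃) : ℂ)) =
        (A : ℂ) * (inner ℂ (v n₁) (v n₃) : ℂ)) (i : κ) :
    S ^ 2 + ((Fintype.card κ : ℝ) - 1) = A * S := by
  classical
  have h := hA i i
  rw [← Finset.add_sum_erase _ _ (Finset.mem_univ i)] at h
  have h1 : ∀ k ∈ Finset.univ.erase i,
      (inner ℂ (v i) (v k) : ℂ) * (inner ℂ (v k) (v i) : ℂ) = 1 := by
    intro k hk
    rw [← inner_conj_symm (v k) (v i), Complex.mul_conj, Complex.normSq_eq_norm_sq,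
      hC i k (Finset.ne_of_mem_erase hk).symm]
    simp
  rw [Finset.sum_congr rfl h1, hS] at h
  simp only [Finset.sum_const, nsmul_eq_mul, mul_one] at h
  rw [Finset.card_erase_of_mem (Finset.mem_univ i), Finset.card_univ,
    Nat.cast_sub (Fintype.card_pos_iff.mpr ⟨i⟩)] at h
  have h' : S * S + ((Fintype.card κ : ℝ) - 1) = A * S := by exact_mod_cast h
  linarith

/-- Facts about regular simplices with unimodular cross inner products. -/
theorem simplex_facts {E ι : Type*} [NormedAddCommGroup E] [InnerProductSpace ℂ E] [Fintype ι]
    (v : ι → E) (S : ℝ) (hS : ∀ n, (inner ℂ (v n) (v n) : ℂ) = (S : ℂ))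
    (hC : ∀ n₁ n₂, n₁ ≠ n₂ → ‖(inner ℂ (v n₁) (v n₂) : ℂ)‖ = 1)
    (K : Finset ι) (hK : K ∈ binder ℂ v) :
    2 ≤ K.card ∧ S = (K.card : ℝ) - 1 ∧ ∀ i ∈ K, ∀ j ∈ K, ∀ k ∈ K, i ≠ j → j ≠ k → i ≠ k →
      (inner ℂ (v i) (v k) * inner ℂ (v k) (v j) * inner ℂ (v j) (v i) : ℂ).re = -1 := by
  classical
  obtain ⟨⟨⟨S', hS'0, hS'⟩, -, ⟨A, hA0, hA⟩⟩, hrank⟩ := hK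
  have hne : K.Nonempty := by
    rw [← Finset.card_pos]; omega
  obtain ⟨i₀, hi₀⟩ := hne
  have hSS : S' = S := by
    have := (hS' ⟨i₀, hi₀⟩).symm.trans (hS i₀)
    exact Complex.ofReal_injective this
  subst hSS
  have htr := etf_trace (fun k : K => v k.1) S' A (fun n => hS n) hA
  have hdg := etf_diag (fun k : K => v k.1) S' A (fun n => hS n)
    (fun a b hab => hC _ _ (fun h => hab (Subtype.ext h))) hA ⟨i₀, hi₀⟩
  have hrange : Set.range (fun k : K => v k.1) = v '' (K : Set ι) := by
    ext x; simp
  rw [hrange] at htr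
  have hr : (Module.finrank ℂ (Submodule.span ℂ (v '' (K : Set ι))) : ℝ) = (K.card : ℝ) - 1 := by
    rw [← hrank]; push_cast; ring
  rw [hr, Fintype.card_coe] at htr
  rw [Fintype.card_coe] at hdg
  have hpos : (1 : ℝ) ≤ K.card := by exact_mod_cast Finset.card_pos.mpr ⟨i₀, hi₀⟩
  have hlt : (0 : ℝ) < (K.card : ℝ) - 1 := by
    by_contra hcon
    have : (K.card : ℝ) - 1 = 0 := by linarith
    rw [this] at htr
    nlinarith
  have hSK : S' = (K.card : ℝ) - 1 := by
    have : S' ^ 2 = ((K.card : ℝ) - 1) ^ 2 := by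
      linear_combination ((K.card : ℝ) - 1) * (-hdg) + S' * (-htr)
    exact (pow_left_inj₀ hS'0.le hlt.le (by norm_num)).mp this
  have hAK : A = K.card := by
    rw [hSK] at htr
    exact mul_right_cancel₀ hlt.ne' htr
  refine ⟨?_, hSK, ?_⟩
  · have : (1 : ℝ) < K.card := by linarith
    exact_mod_cast this
  intro i hi j hj k hk hij hjk hik
  have h := hA ⟨i, hi⟩ ⟨j, hj⟩
  simp only at h
  rw [Finset.sum_coe_sort K (fun n => (inner ℂ (v i) (v n) : ℂ) * inner ℂ (v n) (v j)),
    ← Finset.add_sum_erase _ _ hi,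
    ← Finset.add_sum_erase _ _ (Finset.mem_erase.mpr ⟨hij.symm, hj⟩), hS, hS, hAK, hSK] at h
  have hunit : (inner ℂ (v i) (v j) : ℂ) * inner ℂ (v j) (v i) = 1 := by
    rw [← inner_conj_symm (v j) (v i), Complex.mul_conj, Complex.normSq_eq_norm_sq, hC i j hij]
    simp
  set T := (K.erase i).erase j with hT
  have hTc : (T.card : ℝ) = (K.card : ℝ) - 2 := by
    rw [hT, Finset.card_erase_of_mem (Finset.mem_erase.mpr ⟨hij.symm, hj⟩),
      Finset.card_erase_of_mem hi]
    have : 2 ≤ K.card := by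
      have : (1 : ℝ) < K.card := by linarith
      exact_mod_cast this
    rw [Nat.sub_sub, Nat.cast_sub this]; norm_num
  let t : ι → ℂ := fun n => inner ℂ (v i) (v n) * inner ℂ (v n) (v j) * inner ℂ (v j) (v i)
  have hsum : ∑ n ∈ T, t n = ((-((K.card : ℝ) - 2) : ℝ) : ℂ) := by
    simp only [t]
    rw [← Finset.sum_mul]
    push_cast at h ⊢
    linear_combination (inner ℂ (v j) (v i) : ℂ) * h + (2 - (K.card : ℂ)) * hunit
  have hre : ∑ n ∈ T, ((t n).re + 1) = 0 := by
    rw [Finset.sum_add_distrib, ← Complex.re_sum, hsum, Complex.ofReal_re]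
    simp [hTc]
  have hnn : ∀ n ∈ T, 0 ≤ (t n).re + 1 := by
    intro n hn
    simp only [hT, Finset.mem_erase] at hn
    have : ‖t n‖ = 1 := by
      simp only [t, norm_mul]
      rw [hC i n (Ne.symm hn.2.1), hC n j hn.1, hC j i hij.symm]; norm_num
    have := (abs_le.mp (this ▸ Complex.abs_re_le_norm (t n))).1
    linarith
  have := (Finset.sum_eq_zero_iff_of_nonneg hnn).mp hre k
    (Finset.mem_erase.mpr ⟨hjk.symm, Finset.mem_erase.mpr ⟨hik.symm, hk⟩⟩)
  simp only [t] at this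
  linarith

/-- If `Φ` is an `N`-vector complex ETF spanning a `D`-dimensional
space with `D < N`, scaled so its cross inner products are unimodular, `Ψ` is a
dual of `Φ`, and `(ι, Kb)` is a BIBD all of whose blocks belong to `bin(Φ)`, then
every member of `bin(Ψ)` is an oval of this BIBD. -/
theorem binder_of_dual_is_oval
    {E F ι β : Type*} [NormedAddCommGroup E] [InnerProductSpace ℂ E]
    [NormedAddCommGroup F] [InnerProductSpace ℂ F]
    [Fintype ι] [DecidableEq ι] [Fintype β] [Nonempty β]
    (φ : ι → E) (ψ : ι → F) (D : ℕ) (S : ℝ)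
    (hETF : IsETF ℂ φ)
    (hS : 0 < S) (hnorm : ∀ n, (inner ℂ (φ n) (φ n) : ℂ) = (S : ℂ))
    (hD : Module.finrank ℂ (Submodule.span ℂ (Set.range φ)) = D)
    (hDN : D < Fintype.card ι)
    (hscale : ∀ n₁ n₂ : ι, n₁ ≠ n₂ → ‖(inner ℂ (φ n₁) (φ n₂) : ℂ)‖ = 1)
    (hdual_diag : ∀ n, (inner ℂ (ψ n) (ψ n) : ℂ) =
      (((((Fintype.card ι : ℝ) - D) * S / D : ℝ)) : ℂ))
    (hdual_off : ∀ n₁ n₂ : ι, n₁ ≠ n₂ →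
      (inner ℂ (ψ n₁) (ψ n₂) : ℂ) = -(inner ℂ (φ n₁) (φ n₂) : ℂ))
    (K Λ : ℕ) (hK2 : 2 ≤ K) (hKV : K ≤ Fintype.card ι) (hΛ : 1 ≤ Λ)
    (Kb : β → Finset ι) (hcard : ∀ b, (Kb b).card = K)
    (hBIBD : ∀ n₁ n₂ : ι, n₁ ≠ n₂ →
      (Finset.univ.filter (fun b => n₁ ∈ Kb b ∧ n₂ ∈ Kb b)).card = Λ)
    (hbin : ∀ b, Kb b ∈ binder ℂ φ)
    (L : Finset ι) (hL : L ∈ binder ℂ ψ) :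
    L.Nonempty ∧ ∀ b, (Kb b ∩ L).card = 0 ∨ (Kb b ∩ L).card = 2 := by
  classical
  obtain ⟨-, -, ⟨A, hA0, hA⟩⟩ := hETF
  obtain ⟨b₀⟩ := ‹Nonempty β›
  have hNpos : 0 < Fintype.card ι := by omega
  obtain ⟨n₀⟩ := Fintype.card_pos_iff.mp hNpos
  have htr := etf_trace φ S A hnorm hA
  have hdg := etf_diag φ S A hnorm hscale hA n₀
  rw [hD] at htr
  have hNR : (0 : ℝ) < Fintype.card ι := by exact_mod_cast hNpos
  have hD0 : (D : ℝ) ≠ 0 := by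
    intro h
    rw [h] at htr
    nlinarith
  have hS' : ((Fintype.card ι : ℝ) - D) * S / D = A - S := by
    rw [div_eq_iff hD0]; linear_combination -htr
  rw [hS'] at hdual_diag
  have hscale' : ∀ n₁ n₂ : ι, n₁ ≠ n₂ → ‖(inner ℂ (ψ n₁) (ψ n₂) : ℂ)‖ = 1 := by
    intro a b hab
    rw [hdual_off a b hab, norm_neg, hscale a b hab]
  obtain ⟨hL2, hSL, hLt⟩ := simplex_facts ψ (A - S) hdual_diag hscale' L hL
  have hKf := fun b => simplex_facts φ S hnorm hscale (Kb b) (hbin b)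
  have hSK : S = (K : ℝ) - 1 := by rw [(hKf b₀).2.1, hcard]
  have hN : (Fintype.card ι : ℝ) - 1 = ((K : ℝ) - 1) * ((L.card : ℝ) - 1) := by
    rw [← hSK, ← hSL]; linear_combination hdg
  have hle : ∀ b, (Kb b ∩ L).card ≤ 2 := by
    intro b
    by_contra hcon
    obtain ⟨i, j, k, hi, hj, hk, hij, hik, hjk⟩ := Finset.two_lt_card_iff.mp (not_le.mp hcon)
    rw [Finset.mem_inter] at hi hj hk
    have h1 := (hKf b).2.2 i hi.1 j hj.1 k hk.1 hij hjk hik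
    have h2 := hLt i hi.2 j hj.2 k hk.2 hij hjk hik
    rw [hdual_off i k hik, hdual_off k j hjk.symm, hdual_off j i hij.symm, neg_mul_neg,
      mul_neg, Complex.neg_re, h1] at h2
    norm_num at h2
  refine ⟨Finset.card_pos.mp (by omega), fun b => ?_⟩
  rcases Finset.eq_empty_or_nonempty (Kb b ∩ L) with h0 | ⟨l, hl⟩
  · left; rw [h0, Finset.card_empty]
  right
  rw [Finset.mem_inter] at hl
  -- count over blocks containing `l`
  let R : Finset β := Finset.univ.filter (fun b => l ∈ Kb b)
  have hcount : ∀ M : Finset ι, l ∈ M →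
      ∑ c ∈ R, (((Kb c ∩ M).card : ℝ) - 1) = Λ * ((M.card : ℝ) - 1) := by
    intro M hlM
    have e1 : ∀ c ∈ R, (((Kb c ∩ M).card : ℝ) - 1) =
        ∑ m ∈ M.erase l, if m ∈ Kb c then (1 : ℝ) else 0 := by
      intro c hc
      have hc' : l ∈ Kb c := (Finset.mem_filter.mp hc).2
      rw [Finset.sum_ite_mem, Finset.sum_const, nsmul_eq_mul, mul_one]
      have : (M.erase l ∩ Kb c) = (Kb c ∩ M).erase l := by
        ext x; simp only [Finset.mem_inter, Finset.mem_erase]; tauto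
      rw [this, Finset.card_erase_of_mem (Finset.mem_inter.mpr ⟨hc', hlM⟩), Nat.cast_sub]
      · simp
      · exact Finset.card_pos.mpr ⟨l, Finset.mem_inter.mpr ⟨hc', hlM⟩⟩
    rw [Finset.sum_congr rfl e1, Finset.sum_comm]
    have e2 : ∀ m ∈ M.erase l, ∑ c ∈ R, (if m ∈ Kb c then (1 : ℝ) else 0) = Λ := by
      intro m hm
      rw [Finset.sum_boole, Finset.filter_filter, hBIBD l m (Finset.ne_of_mem_erase hm).symm]
    rw [Finset.sum_congr rfl e2, Finset.sum_const, Finset.card_erase_of_mem hlM, nsmul_eq_mul,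
      Nat.cast_sub (Finset.card_pos.mpr ⟨l, hlM⟩)]
    push_cast; ring
  have hU := hcount Finset.univ (Finset.mem_univ l)
  have hLc := hcount L hl.2
  simp only [Finset.inter_univ, hcard, Finset.sum_const, nsmul_eq_mul, Finset.card_univ] at hU
  rw [hN] at hU
  have hK0 : (K : ℝ) - 1 ≠ 0 := by rw [← hSK]; exact hS.ne'
  have hR : (R.card : ℝ) = Λ * ((L.card : ℝ) - 1) := by
    apply mul_right_cancel₀ hK0
    linear_combination hU
  have hz : ∑ c ∈ R, (2 - ((Kb c ∩ L).card : ℝ)) = 0 := by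
    have : ∑ c ∈ R, (2 - ((Kb c ∩ L).card : ℝ)) =
        ∑ c ∈ R, (1 : ℝ) - ∑ c ∈ R, (((Kb c ∩ L).card : ℝ) - 1) := by
      rw [← Finset.sum_sub_distrib]
      exact Finset.sum_congr rfl fun c _ => by ring
    rw [this, hLc, ← hR]; simp
  have := (Finset.sum_eq_zero_iff_of_nonneg (fun c _ => by
    have : ((Kb c ∩ L).card : ℝ) ≤ 2 := by exact_mod_cast hle c
    linarith)).mp hz b (Finset.mem_filter.mpr ⟨Finset.mem_univ _, hl.1⟩)
  have h2 : ((Kb b ∩ L).card : ℝ) = 2 := by linarith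
  exact_mod_cast h2
end
end

section
/- Let (φ_n)_{n∈N} be a finite family of N vectors of equal norm in a complex inner product space whose span has dimension strictly less than N. If the natural action of its symmetry group on N is doubly transitive, then (φ_n)_{n∈N} is an ETF: there exists C > 0 with |⟨φ_{n₁}, φ_{n₂}⟩| = C for all n₁ ≠ n₂, and there exists A > 0 with ∑_{n₂∈N} ⟨φ_{n₁}, φ_{n₂}⟩·⟨φ_{n₂}, φ_{n₃}⟩ = A·⟨φ_{n₁}, φ_{n₃}⟩ for all n₁, n₃. -/
open scoped BigOperators

noncomputable section

/-- If an equal-norm family of `N` vectors in a complex inner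
product space spans a subspace of dimension `< N` and its symmetry group acts
doubly transitively on the index set, then the family is an ETF: its cross inner
products have a common positive modulus `C` and the tightness identity
`∑ ⟨φ n₁, φ n₂⟩⟨φ n₂, φ n₃⟩ = A⟨φ n₁, φ n₃⟩` holds for some `A > 0`. -/
theorem doubly_transitive_implies_ETF
    {E ι : Type*} [NormedAddCommGroup E] [InnerProductSpace ℂ E] [Fintype ι]
    (φ : ι → E) (S : ℝ) (hS : 0 < S)
    (hnorm : ∀ n, (inner ℂ (φ n) (φ n) : ℂ) = (S : ℂ))
    (hdim : Module.finrank ℂ (Submodule.span ℂ (Set.range φ)) < Fintype.card ι)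
    (hDT : ∀ n₁ n₂ n₃ n₄ : ι, n₁ ≠ n₂ → n₃ ≠ n₄ →
      ∃ σ : Equiv.Perm ι,
        (∃ z : ι → ℂ, (∀ n, ‖z n‖ = 1) ∧
          ∀ m₁ m₂ : ι, m₁ ≠ m₂ →
            (inner ℂ (φ (σ m₁)) (φ (σ m₂)) : ℂ) =
              (starRingEnd ℂ) (z m₁) * z m₂ * (inner ℂ (φ m₁) (φ m₂) : ℂ)) ∧
        σ n₁ = n₃ ∧ σ n₂ = n₄) :
    (∃ C : ℝ, 0 < C ∧ ∀ n₁ n₂ : ι, n₁ ≠ n₂ → ‖(inner ℂ (φ n₁) (φ n₂) : ℂ)‖ = C) ∧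
    (∃ A : ℝ, 0 < A ∧ ∀ n₁ n₃ : ι,
      (∑ n₂, (inner ℂ (φ n₁) (φ n₂) : ℂ) * (inner ℂ (φ n₂) (φ n₃) : ℂ)) =
        (A : ℂ) * (inner ℂ (φ n₁) (φ n₃) : ℂ)) := by
  classical
  have hS' : (S : ℂ) ≠ 0 := by exact_mod_cast hS.ne'
  obtain ⟨G, hG⟩ : ∃ G : ι → ι → ℂ, ∀ a b, G a b = inner ℂ (φ a) (φ b) := ⟨_, fun _ _ => rfl⟩
  simp only [← hG] at hnorm hDT ⊢
  -- a linear dependency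
  have hdep : ¬ LinearIndependent ℂ φ := by
    intro h
    have := linearIndependent_iff_card_eq_finrank_span.mp h
    rw [Set.finrank] at this
    omega
  obtain ⟨c, hc, i, hi⟩ := Fintype.not_linearIndependent_iff.mp hdep
  have hker : ∀ a, ∑ b, G a b * c b = 0 := by
    intro a
    have h : inner ℂ (φ a) (∑ b, c b • φ b) = (0 : ℂ) := by rw [hc, inner_zero_right]
    rw [inner_sum] at h
    rw [← h]
    refine Finset.sum_congr rfl fun b _ => ?_
    rw [inner_smul_right, hG, mul_comm]
  obtain ⟨j, hij, hGij⟩ : ∃ j, i ≠ j ∧ G i j ≠ 0 := by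
    by_contra! h
    have h1 := hker i
    rw [Finset.sum_eq_single i (fun b _ hb => by rw [h b hb.symm, zero_mul])
      (fun h => absurd (Finset.mem_univ _) h), hnorm] at h1
    exact (mul_ne_zero hS' hi) h1
  have hzz : ∀ w : ℂ, ‖w‖ = 1 → (starRingEnd ℂ) w * w = 1 := by
    intro w hw
    rw [mul_comm, Complex.mul_conj, Complex.normSq_eq_norm_sq, hw]
    simp
  obtain ⟨H, hH⟩ : ∃ H : ι → ι → ℂ, ∀ a b, H a b = ∑ k, G a k * G k b := ⟨_, fun _ _ => rfl⟩
  simp only [← hH]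
  -- invariance of the Gram matrix and of its square
  have hinv : ∀ n₁ n₂ n₃ n₄ : ι, n₁ ≠ n₂ → n₃ ≠ n₄ → ∃ σ : Equiv.Perm ι, ∃ z : ι → ℂ,
      (∀ n, ‖z n‖ = 1) ∧ (∀ a b, G (σ a) (σ b) = (starRingEnd ℂ) (z a) * z b * G a b) ∧
      (∀ a b, H (σ a) (σ b) = (starRingEnd ℂ) (z a) * z b * H a b) ∧
      σ n₁ = n₃ ∧ σ n₂ = n₄ := by
    intro n₁ n₂ n₃ n₄ h1 h2
    obtain ⟨σ, ⟨z, hz, hσ⟩, h3, h4⟩ := hDT n₁ n₂ n₃ n₄ h1 h2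
    have hGG : ∀ a b, G (σ a) (σ b) = (starRingEnd ℂ) (z a) * z b * G a b := by
      intro a b
      by_cases hab : a = b
      · subst hab
        rw [hnorm, hnorm, hzz _ (hz a), one_mul]
      · exact hσ a b hab
    refine ⟨σ, z, hz, hGG, ?_, h3, h4⟩
    intro a b
    rw [hH, hH, ← Equiv.sum_comp σ, Finset.mul_sum]
    refine Finset.sum_congr rfl fun k _ => ?_
    rw [hGG, hGG]
    linear_combination ((starRingEnd ℂ) (z a) * z b * (G a k * G k b)) * hzz _ (hz k)
  have hC : ∀ a b, a ≠ b → ‖G a b‖ = ‖G i j‖ := by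
    intro a b hab
    obtain ⟨σ, z, hz, h1, -, rfl, rfl⟩ := hinv i j a b hij hab
    rw [h1, norm_mul, norm_mul, RCLike.norm_conj, hz, hz, one_mul, one_mul]
  refine ⟨⟨‖G i j‖, norm_pos_iff.mpr hGij, hC⟩, ?_⟩
  obtain ⟨r, hr⟩ : ∃ r, r * G i j = H i j := ⟨H i j / G i j, div_mul_cancel₀ _ hGij⟩
  have hoff : ∀ a b, a ≠ b → H a b = r * G a b := by
    intro a b hab
    obtain ⟨σ, z, hz, h1, h2, rfl, rfl⟩ := hinv i j a b hij hab
    rw [h1, h2, ← hr]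
    ring
  have hdiag : ∀ a, H a a = H i i := by
    intro a
    by_cases ha : i = a
    · rw [ha]
    · obtain ⟨σ, z, hz, -, h2, h3, -⟩ := hinv i a a i ha (Ne.symm ha)
      have := h2 i i
      rw [h3, hzz _ (hz i), one_mul] at this
      exact this
  have hHker : ∑ b, H i b * c b = 0 := by
    simp only [hH, Finset.sum_mul]
    rw [Finset.sum_comm]
    refine Finset.sum_eq_zero fun k _ => ?_
    simp only [mul_assoc]
    rw [← Finset.mul_sum, hker, mul_zero]
  have hii : H i i = r * S := by
    have h1 : ∑ b, (H i b - r * G i b) * c b = 0 := by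
      simp only [sub_mul, Finset.sum_sub_distrib, mul_assoc]
      rw [← Finset.mul_sum, hker, hHker]
      simp
    rw [Finset.sum_eq_single i (fun b _ hb => by rw [hoff i b hb.symm]; ring)
      (fun h => absurd (Finset.mem_univ _) h), hnorm] at h1
    exact sub_eq_zero.mp ((mul_eq_zero.mp h1).resolve_right hi)
  have hreal : H i i = ((∑ k, ‖G i k‖ ^ 2 : ℝ) : ℂ) := by
    rw [hH]
    push_cast
    refine Finset.sum_congr rfl fun k _ => ?_
    have : G k i = (starRingEnd ℂ) (G i k) := by rw [hG, hG, inner_conj_symm]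
    rw [this, Complex.mul_conj, Complex.normSq_eq_norm_sq]
    push_cast
    rfl
  have hpos : 0 < ∑ k, ‖G i k‖ ^ 2 :=
    Finset.sum_pos' (fun k _ => by positivity)
      ⟨j, Finset.mem_univ _, by have := norm_pos_iff.mpr hGij; positivity⟩
  have hrA : r = (((∑ k, ‖G i k‖ ^ 2) / S : ℝ) : ℂ) := by
    rw [Complex.ofReal_div, ← hreal, hii, mul_div_cancel_right₀ _ hS']
  refine ⟨(∑ k, ‖G i k‖ ^ 2) / S, div_pos hpos hS, ?_⟩
  intro a b
  rw [← hrA]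
  by_cases hab : a = b
  · subst hab
    rw [hdiag, hii, hnorm]
  · exact hoff a b hab
end
end

section
/- Let Φ = (φ_n)_{n∈N} be a doubly transitive ETF (DTETF): an ETF of N vectors spanning a space of dimension D < N whose symmetry group acts doubly transitively on the index set N, and let Ψ be a dual of Φ. If bin(Φ) is nonempty, then bin(Φ) forms a BIBD: all members of bin(Φ) have the same cardinality and there exists an integer Λ ≥ 1 such that every pair of distinct indices n₁ ≠ n₂ in N is contained in exactly Λ members of bin(Φ). Moreover, in this case every member L of bin(Ψ) is an oval of this BIBD: L is nonempty and #(K ∩ L) ∈ {0, 2} for every K ∈ bin(Φ). -/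
open scoped BigOperators

noncomputable section

section Helpers

variable {E ι : Type*} [NormedAddCommGroup E] [InnerProductSpace ℂ E] [Fintype ι]

theorem simplex_iff (φ : ι → E) (K : Finset ι) :
    IsRegularSimplex ℂ φ K ↔
      ((∃ S : ℝ, 0 < S ∧ ∀ n ∈ K, (inner ℂ (φ n) (φ n) : ℂ) = (S : ℂ)) ∧
      (∃ C : ℝ, 0 < C ∧ ∀ n₁ ∈ K, ∀ n₂ ∈ K, n₁ ≠ n₂ → ‖(inner ℂ (φ n₁) (φ n₂) : ℂ)‖ = C) ∧
      (∃ A : ℝ, 0 < A ∧ ∀ n₁ ∈ K, ∀ n₃ ∈ K,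
        (∑ n₂ ∈ K, (inner ℂ (φ n₁) (φ n₂) : ℂ) * (inner ℂ (φ n₂) (φ n₃) : ℂ)) =
          (A : ℂ) * (inner ℂ (φ n₁) (φ n₃) : ℂ))) ∧
      Module.finrank ℂ (Submodule.span ℂ (φ '' (K : Set ι))) + 1 = K.card := by
  unfold IsRegularSimplex IsETF
  have key : ∀ n₁ n₃ : ι,
      (∑ n₂ : K, (inner ℂ (φ n₁) (φ n₂.1) : ℂ) * (inner ℂ (φ n₂.1) (φ n₃) : ℂ)) =
      (∑ n₂ ∈ K, (inner ℂ (φ n₁) (φ n₂) : ℂ) * (inner ℂ (φ n₂) (φ n₃) : ℂ)) := by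
    intro n₁ n₃
    exact Finset.sum_coe_sort K
      (fun n₂ => (inner ℂ (φ n₁) (φ n₂) : ℂ) * (inner ℂ (φ n₂) (φ n₃) : ℂ))
  simp only [key, Subtype.forall, ne_eq, Subtype.mk.injEq]
  rfl

/-- vanishing of a combination that is orthogonal to the family -/
theorem comb_eq_zero (φ : ι → E) (K : Finset ι) (c : ι → ℂ)
    (h : ∀ j ∈ K, ∑ l ∈ K, c l * (inner ℂ (φ j) (φ l) : ℂ) = 0) :
    ∑ l ∈ K, c l • φ l = 0 := by
  rw [← inner_self_eq_zero (𝕜 := ℂ), sum_inner]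
  apply Finset.sum_eq_zero
  intro j hj
  rw [inner_smul_left, inner_sum]
  simp only [inner_smul_right]
  rw [h j hj, mul_zero]

theorem trace_lemma (φ : ι → E) (K : Finset ι) (S A : ℝ)
    (hS : ∀ n ∈ K, (inner ℂ (φ n) (φ n) : ℂ) = (S : ℂ))
    (hA : ∀ n₁ ∈ K, ∀ n₃ ∈ K,
        (∑ n₂ ∈ K, (inner ℂ (φ n₁) (φ n₂) : ℂ) * (inner ℂ (φ n₂) (φ n₃) : ℂ)) =
          (A : ℂ) * (inner ℂ (φ n₁) (φ n₃) : ℂ)) :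
    A * Module.finrank ℂ (Submodule.span ℂ (φ '' (K : Set ι))) = K.card * S := by
  classical
  set W := Submodule.span ℂ (φ '' (K : Set ι)) with hW
  haveI : FiniteDimensional ℂ W :=
    FiniteDimensional.span_of_finite ℂ (K.finite_toSet.image φ)
  have hmem : ∀ j ∈ K, φ j ∈ W := fun j hj => Submodule.subset_span ⟨j, hj, rfl⟩
  have hfr : ∀ x ∈ W, ∑ i ∈ K, (inner ℂ (φ i) x : ℂ) • φ i = (A : ℂ) • x := by
    intro x hx
    induction hx using Submodule.span_induction with
    | mem x hx =>
      obtain ⟨j, hj, rfl⟩ := hx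
      have hj : j ∈ K := hj
      have := comb_eq_zero φ K
        (fun l => (inner ℂ (φ l) (φ j) : ℂ) - if l = j then (A : ℂ) else 0) (by
          intro m hm
          simp only [sub_mul, Finset.sum_sub_distrib, ite_mul, zero_mul, Finset.sum_ite_eq', hj,
            if_true]
          rw [← hA m hm j hj, sub_eq_zero]
          exact Finset.sum_congr rfl fun l _ => mul_comm _ _)
      simpa [sub_smul, Finset.sum_sub_distrib, ite_smul, Finset.sum_ite_eq', hj,
        sub_eq_zero] using this
    | zero => simp
    | add x y _ _ hx hy => simp [inner_add_right, add_smul, Finset.sum_add_distrib, hx, hy]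
    | smul a x _ hx =>
      simp only [inner_smul_right, mul_smul, ← Finset.smul_sum, hx]
      rw [smul_comm]
  let b := stdOrthonormalBasis ℂ W
  have h1 : ∀ k, (A : ℂ) = ∑ i ∈ K, (inner ℂ (φ i) (b k : E) : ℂ) * inner ℂ (b k : E) (φ i) := by
    intro k
    have h2 := congrArg (fun y => (inner ℂ (b k : E) y : ℂ)) (hfr (b k) (b k).2)
    simp only [inner_sum, inner_smul_right] at h2
    have h3 : (inner ℂ (b k : E) (b k : E) : ℂ) = 1 := by
      have := b.orthonormal.1 k
      rw [inner_self_eq_norm_sq_to_K]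
      have h4 : ‖(b k : E)‖ = 1 := this
      simp [h4]
    rw [h3, mul_one] at h2
    exact h2.symm
  have h2 : ∀ i ∈ K, ∑ k, (inner ℂ (φ i) (b k : E) : ℂ) * inner ℂ (b k : E) (φ i) = (S : ℂ) := by
    intro i hi
    rw [← hS i hi]
    exact b.sum_inner_mul_inner (⟨φ i, hmem i hi⟩ : W) (⟨φ i, hmem i hi⟩ : W)
  have h3 : (A : ℂ) * (Module.finrank ℂ W : ℂ) = (K.card : ℂ) * (S : ℂ) := by
    calc (A : ℂ) * (Module.finrank ℂ W : ℂ) = ∑ k : Fin (Module.finrank ℂ W), (A : ℂ) := by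
          simp [mul_comm]
      _ = ∑ k, ∑ i ∈ K, (inner ℂ (φ i) (b k : E) : ℂ) * inner ℂ (b k : E) (φ i) :=
          Finset.sum_congr rfl fun k _ => h1 k
      _ = ∑ i ∈ K, ∑ k, (inner ℂ (φ i) (b k : E) : ℂ) * inner ℂ (b k : E) (φ i) :=
          Finset.sum_comm
      _ = ∑ i ∈ K, (S : ℂ) := Finset.sum_congr rfl h2
      _ = _ := by simp
  exact_mod_cast h3

theorem simplex_props (φ : ι → E) (S C : ℝ) (hSpos : 0 < S)
    (hS : ∀ n, (inner ℂ (φ n) (φ n) : ℂ) = (S : ℂ))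
    (hCpos : 0 < C)
    (hC : ∀ n₁ n₂, n₁ ≠ n₂ → ‖(inner ℂ (φ n₁) (φ n₂) : ℂ)‖ = C)
    (K : Finset ι) (hK : IsRegularSimplex ℂ φ K) :
    2 ≤ K.card ∧ ((K.card : ℝ) - 1) * C = S ∧
    (∀ i ∈ K, ∀ j ∈ K, ∀ l ∈ K, i ≠ j → j ≠ l → i ≠ l →
      (inner ℂ (φ i) (φ l) : ℂ) * inner ℂ (φ l) (φ j) * inner ℂ (φ j) (φ i) = -(C : ℂ) ^ 3) ∧
    ∃ c : ι → ℂ, (∀ i ∈ K, c i ≠ 0) ∧ ∑ i ∈ K, c i • φ i = 0 := by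
  classical
  rw [simplex_iff] at hK
  obtain ⟨⟨-, -, A, hApos, hA⟩, hrk⟩ := hK
  have htr := trace_lemma φ K S A (fun n _ => hS n) hA
  have hrk' : (Module.finrank ℂ (Submodule.span ℂ (φ '' (K : Set ι))) : ℝ) = K.card - 1 := by
    rw [← hrk]; push_cast; ring
  rw [hrk'] at htr
  have hk1 : 1 ≤ K.card := by omega
  have hk2 : 2 ≤ K.card := by
    by_contra hlt
    have h1 : K.card = 1 := by omega
    rw [h1] at htr
    norm_num at htr
    linarith
  obtain ⟨i0, hi0⟩ : K.Nonempty := Finset.card_pos.mp (by omega)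
  have hkR : (2 : ℝ) ≤ K.card := by exact_mod_cast hk2
  -- diagonal
  have hsymm : ∀ i j : ι, (inner ℂ (φ j) (φ i) : ℂ) = starRingEnd ℂ (inner ℂ (φ i) (φ j)) :=
    fun i j => (inner_conj_symm _ _).symm
  have hdiag : S ^ 2 + (K.card - 1) * C ^ 2 = A * S := by
    have h := hA i0 hi0 i0 hi0
    rw [← Finset.add_sum_erase K _ hi0, hS] at h
    have h2 : ∑ x ∈ K.erase i0, (inner ℂ (φ i0) (φ x) : ℂ) * inner ℂ (φ x) (φ i0)
        = ∑ x ∈ K.erase i0, ((C : ℂ) ^ 2) := by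
      apply Finset.sum_congr rfl
      intro x hx
      rw [hsymm i0 x, Complex.mul_conj, Complex.normSq_eq_norm_sq,
        hC i0 x (Finset.ne_of_mem_erase hx).symm]
      push_cast; ring
    rw [h2, Finset.sum_const, Finset.card_erase_of_mem hi0, nsmul_eq_mul,
      Nat.cast_sub hk1] at h
    rw [sq]
    exact_mod_cast h
  have hkC : ((K.card : ℝ) - 1) * C = S := by
    have h1 : (((K.card : ℝ) - 1) * C) ^ 2 = S ^ 2 := by
      linear_combination (K.card - 1 : ℝ) * hdiag + S * htr
    exact (pow_left_inj₀ (by apply mul_nonneg <;> linarith) hSpos.le two_ne_zero).mp h1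
  have hAk : A = K.card * C := by
    have : A * (K.card - 1 : ℝ) = (K.card * C) * (K.card - 1) := by
      rw [htr, ← hkC]; ring
    exact mul_right_cancel₀ (by linarith : (K.card - 1 : ℝ) ≠ 0) this
  have hAS : A - S = C := by rw [hAk, ← hkC]; ring
  -- the complementary matrix
  let P : ι → ι → ℂ := fun i j => (if i = j then (A : ℂ) else 0) - inner ℂ (φ i) (φ j)
  have hPd : ∀ i, P i i = (C : ℂ) := by
    intro i
    simp only [P, if_true, hS]
    exact_mod_cast hAS
  have hPo : ∀ i j, i ≠ j → P i j = -(inner ℂ (φ i) (φ j) : ℂ) := by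
    intro i j h; simp [P, h]
  have hPn : ∀ i j, ‖P i j‖ = C := by
    intro i j
    by_cases h : i = j
    · subst h; rw [hPd]; simp [abs_of_pos hCpos]
    · rw [hPo i j h, norm_neg, hC i j h]
  have hGP : ∀ j ∈ K, ∀ i ∈ K, ∑ l ∈ K, P l i * (inner ℂ (φ j) (φ l) : ℂ) = 0 := by
    intro j hj i hi
    simp only [P, sub_mul, Finset.sum_sub_distrib, ite_mul, zero_mul, Finset.sum_ite_eq', hi,
      if_true]
    rw [← hA j hj i hi, sub_eq_zero]
    exact Finset.sum_congr rfl fun l _ => mul_comm _ _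
  have hPP : ∀ i ∈ K, ∀ j ∈ K, ∑ l ∈ K, P i l * P l j = (A : ℂ) * P i j := by
    intro i hi j hj
    have h := hGP i hi j hj
    have h2 : ∀ l, P i l * P l j
        = (if i = l then (A : ℂ) * P l j else 0) - P l j * inner ℂ (φ i) (φ l) := by
      intro l
      show ((if i = l then (A : ℂ) else 0) - inner ℂ (φ i) (φ l)) * P l j = _
      split_ifs <;> ring
    simp only [h2, Finset.sum_sub_distrib, h, Finset.sum_ite_eq, hi, if_true, sub_zero]
  have hPconj : ∀ i j, P j i = starRingEnd ℂ (P i j) := by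
    intro i j
    by_cases h : i = j
    · subst h; rw [hPd]; simp
    · rw [hPo i j h, hPo j i (Ne.symm h), hsymm i j, map_neg]
  have htrip : ∀ i ∈ K, ∀ j ∈ K, ∀ l ∈ K, P i l * P l j * P j i = (C : ℂ) ^ 3 := by
    intro i hi j hj
    have hsum : ∑ l ∈ K, P i l * P l j * P j i = ((K.card * C ^ 3 : ℝ) : ℂ) := by
      rw [← Finset.sum_mul, hPP i hi j hj, hPconj i j, mul_assoc, Complex.mul_conj,
        Complex.normSq_eq_norm_sq, hPn, hAk]
      push_cast; ring
    have hnorm : ∀ l, ‖P i l * P l j * P j i‖ = C ^ 3 := by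
      intro l; rw [norm_mul, norm_mul, hPn, hPn, hPn]; ring
    have hre : ∑ l ∈ K, (P i l * P l j * P j i).re = ∑ l ∈ K, C ^ 3 := by
      rw [← Complex.re_sum, hsum, Complex.ofReal_re, Finset.sum_const, nsmul_eq_mul]
    have hall := (Finset.sum_eq_sum_iff_of_le (fun l _ => by
      rw [← hnorm l]; exact Complex.re_le_norm _)).mp hre
    intro l hl
    have h1 := hall l hl
    have h2 := hnorm l
    have h3 := Complex.sq_norm_sub_sq_re (P i l * P l j * P j i)
    rw [h1, h2] at h3
    have h4 : (P i l * P l j * P j i).im = 0 := by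
      have : (P i l * P l j * P j i).im ^ 2 = 0 := by rw [← h3]; ring
      exact pow_eq_zero_iff two_ne_zero |>.mp this
    apply Complex.ext
    · rw [h1, ← Complex.ofReal_pow, Complex.ofReal_re]
    · rw [h4, ← Complex.ofReal_pow, Complex.ofReal_im]
  refine ⟨hk2, hkC, ?_, fun l => P l i0, ?_, ?_⟩
  · intro i hi j hj l hl hij hjl hil
    have h := htrip i hi j hj l hl
    rw [hPo i l hil, hPo l j hjl.symm, hPo j i hij.symm] at h
    linear_combination -h
  · intro i _ h0
    have := hPn i i0
    have h0' : P i i0 = 0 := h0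
    rw [h0', norm_zero] at this
    linarith
  · exact comb_eq_zero φ K _ fun j hj => hGP j hj i0 hi0

theorem simplex_map (φ : ι → E) (S : ℝ)
    (hS : ∀ n, (inner ℂ (φ n) (φ n) : ℂ) = (S : ℂ))
    (σ : Equiv.Perm ι) (z : ι → ℂ) (hz : ∀ n, ‖z n‖ = 1)
    (hσ : ∀ m₁ m₂ : ι, m₁ ≠ m₂ →
            (inner ℂ (φ (σ m₁)) (φ (σ m₂)) : ℂ) =
              (starRingEnd ℂ) (z m₁) * z m₂ * (inner ℂ (φ m₁) (φ m₂) : ℂ))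
    (K : Finset ι) (hK : IsRegularSimplex ℂ φ K) :
    IsRegularSimplex ℂ φ (K.map σ.toEmbedding) := by
  have hzz : ∀ n, z n * (starRingEnd ℂ) (z n) = 1 := by
    intro n; rw [Complex.mul_conj, Complex.normSq_eq_norm_sq, hz]; simp
  have hσ' : ∀ m₁ m₂ : ι, (inner ℂ (φ (σ m₁)) (φ (σ m₂)) : ℂ) =
              (starRingEnd ℂ) (z m₁) * z m₂ * (inner ℂ (φ m₁) (φ m₂) : ℂ) := by
    intro m₁ m₂
    by_cases h : m₁ = m₂
    · subst h; rw [hS, hS, mul_comm ((starRingEnd ℂ) (z m₁)), hzz, one_mul]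
    · exact hσ m₁ m₂ h
  rw [simplex_iff] at hK ⊢
  obtain ⟨⟨⟨S', hS'pos, hS'⟩, ⟨C, hCpos, hC⟩, A, hApos, hA⟩, hrk⟩ := hK
  have hA' : ∀ n₁ ∈ K.map σ.toEmbedding, ∀ n₃ ∈ K.map σ.toEmbedding,
        (∑ n₂ ∈ K.map σ.toEmbedding,
          (inner ℂ (φ n₁) (φ n₂) : ℂ) * (inner ℂ (φ n₂) (φ n₃) : ℂ)) =
          (A : ℂ) * (inner ℂ (φ n₁) (φ n₃) : ℂ) := by
    intro n₁ h₁ n₃ h₃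
    obtain ⟨m₁, hm₁, rfl⟩ := Finset.mem_map.mp h₁
    obtain ⟨m₃, hm₃, rfl⟩ := Finset.mem_map.mp h₃
    rw [Finset.sum_map]
    simp only [Equiv.coe_toEmbedding, hσ']
    have h := hA m₁ hm₁ m₃ hm₃
    rw [mul_left_comm, ← h, Finset.mul_sum]
    apply Finset.sum_congr rfl
    intro l _
    linear_combination ((starRingEnd ℂ) (z m₁) * z m₃ * inner ℂ (φ m₁) (φ l) *
      inner ℂ (φ l) (φ m₃)) * hzz l
  have hcard : (K.map σ.toEmbedding).card = K.card := Finset.card_map _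
  refine ⟨⟨⟨S', hS'pos, ?_⟩, ⟨C, hCpos, ?_⟩, A, hApos, hA'⟩, ?_⟩
  · obtain ⟨i, hi⟩ : K.Nonempty := Finset.card_pos.mp (by omega)
    intro n _
    rw [← hS' i hi, hS, hS]
  · intro n₁ h₁ n₂ h₂ hne
    obtain ⟨m₁, hm₁, rfl⟩ := Finset.mem_map.mp h₁
    obtain ⟨m₂, hm₂, rfl⟩ := Finset.mem_map.mp h₂
    have hne' : m₁ ≠ m₂ := fun h => hne (by rw [h])
    simp only [Equiv.coe_toEmbedding, hσ', norm_mul, RCLike.norm_conj, hz, one_mul]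
    exact hC m₁ hm₁ m₂ hm₂ hne'
  · have t1 := trace_lemma φ K S A (fun n _ => hS n) hA
    have t2 := trace_lemma φ (K.map σ.toEmbedding) S A (fun n _ => hS n) hA'
    rw [hcard, ← t1] at t2
    have t3 := mul_left_cancel₀ hApos.ne' t2
    rw [hcard, ← hrk]
    congr 1
    exact_mod_cast t3

end Helpers

/-- The binder of a doubly transitive ETF, if nonempty, forms a
BIBD, and every member of the binder of its dual is an oval of this BIBD. -/
theorem binder_of_DTETF_forms_BIBD
    {E F ι : Type*} [NormedAddCommGroup E] [InnerProductSpace ℂ E]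
    [NormedAddCommGroup F] [InnerProductSpace ℂ F]
    [Fintype ι] [DecidableEq ι]
    (φ : ι → E) (ψ : ι → F) (D : ℕ) (S : ℝ)
    (hETF : IsETF ℂ φ)
    (hS : 0 < S) (hnorm : ∀ n, (inner ℂ (φ n) (φ n) : ℂ) = (S : ℂ))
    (hD : Module.finrank ℂ (Submodule.span ℂ (Set.range φ)) = D)
    (hDN : D < Fintype.card ι)
    (hDT : ∀ n₁ n₂ n₃ n₄ : ι, n₁ ≠ n₂ → n₃ ≠ n₄ →
      ∃ σ : Equiv.Perm ι,
        (∃ z : ι → ℂ, (∀ n, ‖z n‖ = 1) ∧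
          ∀ m₁ m₂ : ι, m₁ ≠ m₂ →
            (inner ℂ (φ (σ m₁)) (φ (σ m₂)) : ℂ) =
              (starRingEnd ℂ) (z m₁) * z m₂ * (inner ℂ (φ m₁) (φ m₂) : ℂ)) ∧
        σ n₁ = n₃ ∧ σ n₂ = n₄)
    (hdual_diag : ∀ n, (inner ℂ (ψ n) (ψ n) : ℂ) =
      (((((Fintype.card ι : ℝ) - D) * S / D : ℝ)) : ℂ))
    (hdual_off : ∀ n₁ n₂ : ι, n₁ ≠ n₂ →
      (inner ℂ (ψ n₁) (ψ n₂) : ℂ) = -(inner ℂ (φ n₁) (φ n₂) : ℂ))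
    (hne : (binder ℂ φ).Nonempty) :
    (∃ k : ℕ, ∀ K ∈ binder ℂ φ, K.card = k) ∧
    (∃ Λ : ℕ, 1 ≤ Λ ∧ ∀ n₁ n₂ : ι, n₁ ≠ n₂ →
      {K ∈ binder ℂ φ | n₁ ∈ K ∧ n₂ ∈ K}.ncard = Λ) ∧
    (∀ L ∈ binder ℂ ψ,
      L.Nonempty ∧ ∀ K ∈ binder ℂ φ, (K ∩ L).card = 0 ∨ (K ∩ L).card = 2) := by
  obtain ⟨-, ⟨C, hCpos, hC⟩, -⟩ := hETF
  have props := simplex_props φ S C hS hnorm hCpos hC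
  obtain ⟨K₀, hK₀⟩ := hne
  refine ⟨⟨K₀.card, ?_⟩, ?_, ?_⟩
  · intro K hK
    obtain ⟨-, h1, -⟩ := props K hK
    obtain ⟨-, h2, -⟩ := props K₀ hK₀
    have h3 : (K.card : ℝ) - 1 = K₀.card - 1 :=
      mul_right_cancel₀ hCpos.ne' (h1.trans h2.symm)
    have h4 : (K.card : ℝ) = K₀.card := by linarith
    exact_mod_cast h4
  · obtain ⟨a, ha, b, hb, hab⟩ := Finset.one_lt_card.mp (props K₀ hK₀).1
    have hle : ∀ n₁ n₂ n₃ n₄ : ι, n₁ ≠ n₂ → n₃ ≠ n₄ →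
        {K ∈ binder ℂ φ | n₁ ∈ K ∧ n₂ ∈ K}.ncard ≤
        {K ∈ binder ℂ φ | n₃ ∈ K ∧ n₄ ∈ K}.ncard := by
      intro n₁ n₂ n₃ n₄ h12 h34
      obtain ⟨σ, ⟨z, hz, hσ⟩, rfl, rfl⟩ := hDT n₁ n₂ n₃ n₄ h12 h34
      apply Set.ncard_le_ncard_of_injOn (fun K => K.map σ.toEmbedding)
      · rintro K ⟨hK, h1, h2⟩
        exact ⟨simplex_map φ S hnorm σ z hz hσ K hK,
          Finset.mem_map_of_mem σ.toEmbedding h1, Finset.mem_map_of_mem σ.toEmbedding h2⟩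
      · exact (Finset.map_injective σ.toEmbedding).injOn
    refine ⟨{K ∈ binder ℂ φ | a ∈ K ∧ b ∈ K}.ncard, ?_, ?_⟩
    · exact (Set.ncard_pos (Set.toFinite _)).mpr ⟨K₀, hK₀, ha, hb⟩
    · intro n₁ n₂ h12
      exact le_antisymm (hle _ _ _ _ h12 hab) (hle _ _ _ _ hab h12)
  · intro L hL
    have hDpos : 0 < D := by
      by_contra h0
      have h0 : D = 0 := by omega
      rw [h0] at hD
      obtain ⟨a, ha, -⟩ := Finset.one_lt_card.mp (props K₀ hK₀).1
      haveI : FiniteDimensional ℂ (Submodule.span ℂ (Set.range φ)) :=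
        FiniteDimensional.span_of_finite ℂ (Set.finite_range φ)
      have hbot := Submodule.finrank_eq_zero.mp hD
      have hm : φ a ∈ Submodule.span ℂ (Set.range φ) := Submodule.subset_span ⟨a, rfl⟩
      rw [hbot, Submodule.mem_bot] at hm
      have := hnorm a
      rw [hm, inner_zero_left] at this
      have h5 : S = 0 := by exact_mod_cast this.symm
      linarith
    have hDR : (0 : ℝ) < D := by exact_mod_cast hDpos
    have hDNR : (D : ℝ) < Fintype.card ι := by exact_mod_cast hDN
    have hTpos : 0 < ((Fintype.card ι : ℝ) - D) * S / D :=
      div_pos (mul_pos (by linarith) hS) hDR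
    have hCψ : ∀ n₁ n₂, n₁ ≠ n₂ → ‖(inner ℂ (ψ n₁) (ψ n₂) : ℂ)‖ = C := by
      intro n₁ n₂ h
      rw [hdual_off n₁ n₂ h, norm_neg, hC n₁ n₂ h]
    obtain ⟨hL2, -, hLt, d, hd, hd0⟩ :=
      simplex_props ψ _ C hTpos hdual_diag hCpos hCψ L hL
    refine ⟨Finset.card_pos.mp (by omega), ?_⟩
    intro K hK
    obtain ⟨hK2, -, hKt, c, hc, hc0⟩ := props K hK
    have hle2 : (K ∩ L).card ≤ 2 := by
      by_contra hgt
      obtain ⟨x, y, w, hx, hy, hw, hxy, hxw, hyw⟩ :=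
        Finset.two_lt_card_iff.mp (not_le.mp hgt)
      rw [Finset.mem_inter] at hx hy hw
      have t1 := hKt x hx.1 y hy.1 w hw.1 hxy hyw hxw
      have t2 := hLt x hx.2 y hy.2 w hw.2 hxy hyw hxw
      rw [hdual_off _ _ hxw, hdual_off _ _ hyw.symm, hdual_off _ _ hxy.symm] at t2
      have t3 : (C : ℂ) ^ 3 = 0 := by linear_combination (1 / 2 : ℂ) * t1 + (1 / 2 : ℂ) * t2
      have t4 : (C : ℂ) = 0 := pow_eq_zero_iff three_ne_zero |>.mp t3
      have t5 : C = 0 := by exact_mod_cast t4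
      linarith
    have hne1 : (K ∩ L).card ≠ 1 := by
      intro h1
      obtain ⟨x, hx⟩ := Finset.card_eq_one.mp h1
      set T : ℝ := ((Fintype.card ι : ℝ) - D) * S / D with hT
      have hGd : ∀ j, ∑ m ∈ L, d m * (inner ℂ (φ j) (φ m) : ℂ)
          = if j ∈ L then ((T + S : ℝ) : ℂ) * d j else 0 := by
        intro j
        have h2 : ∑ m ∈ L, d m * (inner ℂ (ψ j) (ψ m) : ℂ) = 0 := by
          have := congrArg (fun y => (inner ℂ (ψ j) y : ℂ)) hd0
          simpa only [inner_sum, inner_smul_right, inner_zero_right] using this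
        have h3 : ∀ m, d m * (inner ℂ (φ j) (φ m) : ℂ) =
            (if j = m then ((T + S : ℝ) : ℂ) * d m else 0)
              - d m * (inner ℂ (ψ j) (ψ m) : ℂ) := by
          intro m
          by_cases hjm : j = m
          · subst hjm
            rw [hnorm, hdual_diag, if_pos rfl]
            push_cast; ring
          · rw [hdual_off j m hjm, if_neg hjm]; ring
        simp only [h3, Finset.sum_sub_distrib, h2, Finset.sum_ite_eq, sub_zero]
      have hzero : (inner ℂ (∑ j ∈ K, c j • φ j) (∑ m ∈ L, d m • φ m) : ℂ) = 0 := by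
        rw [hc0, inner_zero_left]
      rw [sum_inner] at hzero
      simp only [inner_smul_left, inner_sum, inner_smul_right] at hzero
      simp only [mul_left_comm (d _), ← Finset.mul_sum, hGd, mul_ite, mul_zero] at hzero
      rw [← Finset.sum_filter, Finset.filter_mem_eq_inter, hx, Finset.sum_singleton] at hzero
      have hxm : x ∈ K ∩ L := by rw [hx]; exact Finset.mem_singleton_self x
      rw [Finset.mem_inter] at hxm
      have hTS : ((T + S : ℝ) : ℂ) ≠ 0 := by
        have : T + S ≠ 0 := by linarith
        exact_mod_cast this
      exact mul_ne_zero ((map_ne_zero _).mpr (hc x hxm.1)) (mul_ne_zero hTS (hd x hxm.2)) hzero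
    omega
end
end

section
/- Let P be a prime, J a positive integer, B a symplectic form on a 2J-dimensional vector space V over the field F_P, and Φ a symplectic ETF for B. If P > 2 then bin(Φ) is empty. If P = 2, then bin(Φ) consists exactly of the subsets of V of the form v + ({0} ∪ S), where v ∈ V and S ⊆ V satisfies #S = 2^J + 1 and B(v₁, v₂) = 1 for all v₁, v₂ ∈ S with v₁ ≠ v₂. -/
open scoped BigOperators

noncomputable section

/-- A bilinear form is symplectic: alternating and nondegenerate. -/
def IsSymplectic {F V : Type*} [CommRing F] [AddCommGroup V] [Module F V]
    (B : V →ₗ[F] V →ₗ[F] F) : Prop :=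
  (∀ v, B v v = 0) ∧ ∀ v : V, v ≠ 0 → ∃ w, B v w ≠ 0

/-- Kernel dimension of the synthesis operator. -/
lemma finrank_ker_synth {E ι : Type*} [NormedAddCommGroup E] [InnerProductSpace ℂ E] [Fintype ι]
    (ψ : ι → E) :
    Module.finrank ℂ (Submodule.span ℂ (Set.range ψ)) +
      Module.finrank ℂ (LinearMap.ker (Fintype.linearCombination ℂ ψ)) = Fintype.card ι := by
  have h := LinearMap.finrank_range_add_finrank_ker (Fintype.linearCombination ℂ ψ)
  rw [Fintype.range_linearCombination] at h
  simpa using h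

/-- A combination orthogonal to all the vectors of the family vanishes. -/
lemma comb_eq_zero_s5 {E ι : Type*} [NormedAddCommGroup E] [InnerProductSpace ℂ E] [Fintype ι]
    (ψ : ι → E) (c : ι → ℂ) (h : ∀ i, ∑ k, c k * (inner ℂ (ψ i) (ψ k) : ℂ) = 0) :
    ∑ k, c k • ψ k = 0 := by
  rw [← inner_self_eq_zero (𝕜 := ℂ), sum_inner]
  refine Finset.sum_eq_zero fun i _ => ?_
  rw [inner_smul_left, inner_sum]
  simp only [inner_smul_right]
  rw [h i, mul_zero]

lemma simplex_forward {E ι : Type*} [NormedAddCommGroup E] [InnerProductSpace ℂ E] [Fintype ι]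
    [DecidableEq ι] (ψ : ι → E) (S A : ℝ) (hS : 0 < S)
    (hd : ∀ i, (inner ℂ (ψ i) (ψ i) : ℂ) = (S : ℂ))
    (ho : ∀ i j, i ≠ j → ‖(inner ℂ (ψ i) (ψ j) : ℂ)‖ = 1)
    (hA : ∀ i j, ∑ k, (inner ℂ (ψ i) (ψ k) : ℂ) * (inner ℂ (ψ k) (ψ j) : ℂ)
      = (A : ℂ) * (inner ℂ (ψ i) (ψ j) : ℂ))
    (hr : Module.finrank ℂ (Submodule.span ℂ (Set.range ψ)) + 1 = Fintype.card ι) :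
    S + 1 = Fintype.card ι ∧ ∀ i j k, i ≠ j → j ≠ k → i ≠ k →
      (inner ℂ (ψ i) (ψ j) : ℂ) * (inner ℂ (ψ j) (ψ k) : ℂ) = - (inner ℂ (ψ i) (ψ k) : ℂ) := by
  have hk := finrank_ker_synth ψ
  have hker : Module.finrank ℂ (LinearMap.ker (Fintype.linearCombination ℂ ψ)) = 1 := by omega
  obtain ⟨⟨x, hx⟩, -, hx1⟩ := finrank_eq_one_iff'.1 hker
  have hM : ∀ j, ∃ t : ℂ, ∀ k, t * x k = (if k = j then (A : ℂ) else 0) - inner ℂ (ψ k) (ψ j) := by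
    intro j
    have hmem : (fun k => (if k = j then (A : ℂ) else 0) - inner ℂ (ψ k) (ψ j)) ∈
        LinearMap.ker (Fintype.linearCombination ℂ ψ) := by
      rw [LinearMap.mem_ker, Fintype.linearCombination_apply]
      apply comb_eq_zero_s5
      intro i
      simp only [sub_mul, Finset.sum_sub_distrib, ite_mul, zero_mul, Finset.sum_ite_eq',
        Finset.sum_ite_eq, Finset.mem_univ, if_true]
      rw [← hA i j, sub_eq_zero]
      exact Finset.sum_congr rfl fun k _ => mul_comm _ _
    obtain ⟨t, ht⟩ := hx1 ⟨_, hmem⟩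
    refine ⟨t, fun k => ?_⟩
    have := congrFun (congrArg Subtype.val ht) k
    simpa using this
  choose t ht using hM
  have hcard : 1 < Fintype.card ι := by
    by_contra hc
    have h1 : Fintype.card ι = 1 := by omega
    have h0 : Module.finrank ℂ (Submodule.span ℂ (Set.range ψ)) = 0 := by omega
    haveI : FiniteDimensional ℂ (Submodule.span ℂ (Set.range ψ)) :=
      FiniteDimensional.span_of_finite ℂ (Set.finite_range ψ)
    have hb := Submodule.finrank_eq_zero.1 h0
    obtain ⟨i, -⟩ := Fintype.card_eq_one_iff.1 h1
    have hi : ψ i = 0 := by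
      have : ψ i ∈ Submodule.span ℂ (Set.range ψ) := Submodule.subset_span ⟨i, rfl⟩
      rw [hb] at this
      simpa using this
    have := hd i
    rw [hi, inner_zero_left] at this
    have h2 : (0 : ℝ) = S := by exact_mod_cast this
    linarith
  have hsym : ∀ i j, i ≠ j → (inner ℂ (ψ i) (ψ j) : ℂ) * (inner ℂ (ψ j) (ψ i) : ℂ) = 1 := by
    intro i j hij
    rw [← inner_conj_symm (ψ j) (ψ i), Complex.mul_conj, Complex.normSq_eq_norm_sq, ho i j hij]
    simp
  obtain ⟨i₀, j₀, hij₀⟩ := Fintype.exists_pair_of_one_lt_card hcard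
  have e1 : S * S + (Fintype.card ι - 1 : ℝ) = A * S := by
    have h := hA i₀ i₀
    rw [← Finset.add_sum_erase _ _ (Finset.mem_univ i₀), hd,
      Finset.sum_congr rfl (fun k hk => hsym i₀ k (Finset.ne_of_mem_erase hk).symm)] at h
    rw [Finset.sum_const, Finset.card_erase_of_mem (Finset.mem_univ _), Finset.card_univ,
      nsmul_eq_mul, mul_one, Nat.cast_sub hcard.le] at h
    exact_mod_cast h
  have hc' : (1 : ℝ) < Fintype.card ι := by exact_mod_cast hcard
  have e2 : (A - S) * (A - S) = 1 := by
    have a1 := ht j₀ i₀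
    have a2 := ht i₀ j₀
    have a3 := ht i₀ i₀
    have a4 := ht j₀ j₀
    rw [if_neg hij₀] at a1
    rw [if_neg hij₀.symm] at a2
    rw [if_pos rfl, hd] at a3 a4
    have h := hsym i₀ j₀ hij₀
    have : ((A : ℂ) - S) * (A - S) = 1 := by
      rw [← h]
      linear_combination (-(t j₀ * x j₀)) * a3 - (A - S) * a4 + (t i₀ * x j₀) * a1
        - inner ℂ (ψ i₀) (ψ j₀) * a2
    exact_mod_cast this
  have hpos : 0 < A - S := by
    by_contra hneg
    push Not at hneg
    nlinarith
  have e3 : A - S = 1 := by nlinarith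
  refine ⟨?_, ?_⟩
  · have : A = S + 1 := by linarith
    subst this
    nlinarith
  · intro i j k hij hjk hik
    have a1 := ht j i
    have a2 := ht k j
    have a3 := ht k i
    have a4 := ht j j
    rw [if_neg hij] at a1
    rw [if_neg hjk] at a2
    rw [if_neg hik] at a3
    rw [if_pos rfl, hd] at a4
    have e4 : (A : ℂ) - S = 1 := by exact_mod_cast e3
    rw [e4] at a4
    linear_combination (-(t k * x j)) * a1 + inner ℂ (ψ i) (ψ j) * a2 + a3 + (t k * x i) * a4

lemma simplex_backward {E ι : Type*} [NormedAddCommGroup E] [InnerProductSpace ℂ E] [Fintype ι]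
    [DecidableEq ι] (ψ : ι → E) (x : ι → ℂ) (hx : ∀ i, x i * x i = 1)
    (hc : 1 < Fintype.card ι)
    (hG : ∀ i j, (inner ℂ (ψ i) (ψ j) : ℂ) =
      (if i = j then (Fintype.card ι : ℂ) else 0) - x i * x j) :
    IsETF ℂ ψ ∧ Module.finrank ℂ (Submodule.span ℂ (Set.range ψ)) + 1 = Fintype.card ι := by
  have hc' : (1 : ℝ) < Fintype.card ι := by exact_mod_cast hc
  have hN : (Fintype.card ι : ℂ) ≠ 0 := by
    have : Fintype.card ι ≠ 0 := by omega
    exact_mod_cast this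
  have hsum : ∑ k, x k * x k = (Fintype.card ι : ℂ) := by simp [hx]
  have hcomb : ∀ (c : ι → ℂ) i, ∑ k, c k * (inner ℂ (ψ i) (ψ k) : ℂ) =
      (Fintype.card ι : ℂ) * c i - x i * ∑ k, c k * x k := by
    intro c i
    simp only [hG, mul_sub, Finset.sum_sub_distrib, mul_ite, mul_zero, Finset.sum_ite_eq,
      Finset.mem_univ, if_true, Finset.mul_sum]
    congr 1
    · ring
    · exact Finset.sum_congr rfl fun k _ => by ring
  refine ⟨⟨⟨Fintype.card ι - 1, by linarith, fun n => ?_⟩, ⟨1, one_pos, fun i j hij => ?_⟩,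
    ⟨Fintype.card ι, by linarith, fun i j => ?_⟩⟩, ?_⟩
  · rw [hG, if_pos rfl, hx]; push_cast; rfl
  · have hn : ∀ i, ‖x i‖ = 1 := by
      intro i
      have := congrArg norm (hx i)
      rw [norm_mul, norm_one] at this
      nlinarith [norm_nonneg (x i)]
    rw [hG, if_neg hij]; simp [hn]
  · have h1 := hcomb (fun k => inner ℂ (ψ k) (ψ j)) i
    have h2 : ∑ k, (inner ℂ (ψ k) (ψ j) : ℂ) * x k = 0 := by
      simp only [hG, sub_mul, Finset.sum_sub_distrib, ite_mul, zero_mul, Finset.sum_ite_eq',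
        Finset.sum_ite_eq, Finset.mem_univ, if_true]
      rw [← hsum, Finset.sum_mul, sub_eq_zero]
      exact Finset.sum_congr rfl fun k _ => by ring
    rw [h2, mul_zero, sub_zero] at h1
    refine Eq.trans ?_ h1
    exact Finset.sum_congr rfl fun k _ => mul_comm _ _
  · rw [← finrank_ker_synth ψ]
    congr 1
    symm
    have hmem : x ∈ LinearMap.ker (Fintype.linearCombination ℂ ψ) := by
      rw [LinearMap.mem_ker, Fintype.linearCombination_apply]
      apply comb_eq_zero_s5
      intro i
      rw [hcomb, hsum]; ring
    refine finrank_eq_one_iff'.2 ⟨⟨x, hmem⟩, ?_, ?_⟩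
    · intro h
      have h0 : x = 0 := congrArg Subtype.val h
      haveI : Nonempty ι := Fintype.card_pos_iff.1 (by omega)
      have := hx (Classical.arbitrary ι)
      simp [h0] at this
    · rintro ⟨c, hcm⟩
      refine ⟨(∑ k, c k * x k) / (Fintype.card ι : ℂ), Subtype.ext (funext fun i => ?_)⟩
      have h0 := hcomb c i
      rw [LinearMap.mem_ker, Fintype.linearCombination_apply] at hcm
      have h1 : ∑ k, c k * (inner ℂ (ψ i) (ψ k) : ℂ) = 0 := by
        have := congrArg (fun y => (inner ℂ (ψ i) y : ℂ)) hcm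
        simpa [inner_sum, inner_smul_right] using this
      rw [h1] at h0
      simp only [Submodule.coe_smul, Pi.smul_apply, smul_eq_mul]
      field_simp
      linear_combination h0

/-- The sign character of `ZMod 2`. -/
def sgn2 (a : ZMod 2) : ℂ := if a = 0 then 1 else -1

lemma exp_eq_sgn2 (a : ZMod 2) :
    Complex.exp (2 * Real.pi * Complex.I * (a.val : ℂ) / ((2 : ℕ) : ℂ)) = sgn2 a := by
  have ha : a = 0 ∨ a = 1 := by revert a; decide
  rcases ha with rfl | rfl
  · simp [sgn2]
  · have : (2 * Real.pi * Complex.I * ((1 : ZMod 2).val : ℂ) / ((2 : ℕ) : ℂ)) =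
        Real.pi * Complex.I := by
      rw [show (1 : ZMod 2).val = 1 from rfl]
      push_cast
      ring
    rw [this, Complex.exp_pi_mul_I]
    simp [sgn2]

lemma sgn2_add (a b : ZMod 2) : sgn2 (a + b) = sgn2 a * sgn2 b := by
  have ha : a = 0 ∨ a = 1 := by revert a; decide
  have hb : b = 0 ∨ b = 1 := by revert b; decide
  have h2 : (1 + 1 : ZMod 2) = 0 := by decide
  rcases ha with rfl | rfl <;> rcases hb with rfl | rfl <;> simp [sgn2, h2]

lemma sgn2_sq (a : ZMod 2) : sgn2 a * sgn2 a = 1 := by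
  unfold sgn2; split_ifs <;> simp

lemma neg_zmod2 : ∀ a : ZMod 2, -a = a := by decide

lemma sgn2_neg_one (a : ZMod 2) (h : sgn2 a = -1) : a = 1 := by
  have ha : ∀ a : ZMod 2, a = 0 ∨ a = 1 := by decide
  replace ha := ha a
  rcases ha with rfl | rfl
  · exfalso
    simp [sgn2] at h
    norm_num [Complex.ext_iff] at h
  · rfl

/-- The binder of a symplectic ETF is empty when `P > 2`; when
`P = 2` it consists exactly of the sets `v + ({0} ∪ S)` where `#S = 2^J + 1`
and `B(v₁,v₂) = 1` for all distinct `v₁, v₂ ∈ S`. -/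
theorem binder_of_symplectic_ETF
    {P J : ℕ} [Fact (Nat.Prime P)] (hJ : 0 < J)
    {V : Type*} [AddCommGroup V] [Module (ZMod P) V] [Fintype V] [DecidableEq V]
    (hdim : Module.finrank (ZMod P) V = 2 * J)
    (B : V →ₗ[ZMod P] V →ₗ[ZMod P] ZMod P) (hB : IsSymplectic B)
    {E : Type*} [NormedAddCommGroup E] [InnerProductSpace ℂ E]
    (Φ : V → E)
    (hdiag : ∀ v, (inner ℂ (Φ v) (Φ v) : ℂ) = ((P : ℂ) ^ J + 1))
    (hoff : ∀ v₁ v₂ : V, v₁ ≠ v₂ → (inner ℂ (Φ v₁) (Φ v₂) : ℂ) =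
      Complex.exp (2 * Real.pi * Complex.I * ((B v₁ v₂).val : ℂ) / (P : ℂ))) :
    (2 < P → binder ℂ Φ = ∅) ∧
    (P = 2 → binder ℂ Φ = {K : Finset V | ∃ (v : V) (S : Finset V),
      S.card = 2 ^ J + 1 ∧
      (∀ v₁ ∈ S, ∀ v₂ ∈ S, v₁ ≠ v₂ → B v₁ v₂ = 1) ∧
      K = (insert (0 : V) S).image (fun s => v + s)}) := by
  classical
  have hPp : Nat.Prime P := Fact.out
  have hP0 : (P : ℂ) ≠ 0 := by exact_mod_cast hPp.ne_zero
  have hnorm : ∀ v₁ v₂ : V, v₁ ≠ v₂ → ‖(inner ℂ (Φ v₁) (Φ v₂) : ℂ)‖ = 1 := by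
    intro v₁ v₂ h
    rw [hoff _ _ h]
    have : (2 * Real.pi * Complex.I * ((B v₁ v₂).val : ℂ) / (P : ℂ)) =
        ((2 * Real.pi * (B v₁ v₂).val / P : ℝ) : ℂ) * Complex.I := by
      push_cast; ring
    rw [this, Complex.norm_exp_ofReal_mul_I]
  have hfwd : ∀ K ∈ binder ℂ Φ, K.card = P ^ J + 2 ∧ ∀ i ∈ K, ∀ j ∈ K, ∀ k ∈ K,
      i ≠ j → j ≠ k → i ≠ k → (inner ℂ (Φ i) (Φ j) : ℂ) * (inner ℂ (Φ j) (Φ k) : ℂ)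
        = - (inner ℂ (Φ i) (Φ k) : ℂ) := by
    rintro K ⟨⟨-, -, A, -, hA⟩, hr⟩
    have h := simplex_forward (fun k : K => Φ k.1) ((P : ℝ) ^ J + 1) A (by positivity)
      (fun i => by rw [hdiag]; push_cast; rfl)
      (fun i j hij => hnorm _ _ (fun h => hij (Subtype.ext h))) hA
      (by
        rw [Fintype.card_coe, ← hr, Set.image_eq_range]
        rfl)
    refine ⟨?_, ?_⟩
    · have h1 := h.1
      rw [Fintype.card_coe] at h1
      have h2 : ((P ^ J + 1 + 1 : ℕ) : ℝ) = K.card := by push_cast; exact h1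
      have h3 : P ^ J + 1 + 1 = K.card := by exact_mod_cast h2
      omega
    · intro i hi j hj k hk hij hjk hik
      exact h.2 ⟨i, hi⟩ ⟨j, hj⟩ ⟨k, hk⟩ (by simpa using hij) (by simpa using hjk)
        (by simpa using hik)
  refine ⟨fun hP2 => ?_, ?_⟩
  · rw [Set.eq_empty_iff_forall_notMem]
    intro K hK
    obtain ⟨hcard, h3⟩ := hfwd K hK
    have h2 : 2 < K.card := by
      have : 0 < P ^ J := pow_pos hPp.pos J
      omega
    obtain ⟨i, j, k, hi, hj, hk, hij, hik, hjk⟩ := Finset.two_lt_card.1 h2 |> fun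
      | ⟨i, hi, j, hj, k, hk, hij, hik, hjk⟩ => (⟨i, j, k, hi, hj, hk, hij, hik, hjk⟩ :
        ∃ i j k, i ∈ K ∧ j ∈ K ∧ k ∈ K ∧ i ≠ j ∧ i ≠ k ∧ j ≠ k)
    have h := h3 i hi j hj k hk hij hjk hik
    have hpow : ∀ v₁ v₂ : V, v₁ ≠ v₂ → (inner ℂ (Φ v₁) (Φ v₂) : ℂ) ^ P = 1 := by
      intro v₁ v₂ hv
      rw [hoff _ _ hv, ← Complex.exp_nat_mul, Complex.exp_eq_one_iff]
      refine ⟨(B v₁ v₂).val, ?_⟩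
      push_cast
      field_simp
    have hodd : Odd P := hPp.odd_of_ne_two (by omega)
    have h4 := congrArg (fun z : ℂ => z ^ P) h
    simp only [mul_pow, hodd.neg_pow, hpow i j hij, hpow j k hjk, hpow i k hik] at h4
    norm_num [Complex.ext_iff] at h4
  · rintro rfl
    have hG : ∀ v₁ v₂ : V, v₁ ≠ v₂ → (inner ℂ (Φ v₁) (Φ v₂) : ℂ) = sgn2 (B v₁ v₂) := by
      intro v₁ v₂ h
      rw [hoff _ _ h]
      exact exp_eq_sgn2 _
    have hneg : ∀ a : ZMod 2, -a = a := neg_zmod2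
    have hanti : ∀ a b, B a b = B b a := by
      intro a b
      have h := hB.1 (a + b)
      simp only [map_add, LinearMap.add_apply, hB.1, zero_add, add_zero] at h
      rw [← hneg (B b a)]
      linear_combination h
    ext K
    constructor
    · intro hK
      obtain ⟨hcard, h3⟩ := hfwd K hK
      have hcard' : K.card = (2 ^ J + 1) + 1 := hcard
      have hne : K.Nonempty := Finset.card_pos.1 (by rw [hcard']; exact Nat.succ_pos _)
      obtain ⟨v, hv⟩ := hne
      refine ⟨v, (K.erase v).image (fun s => s - v), ?_, ?_, ?_⟩
      · rw [Finset.card_image_of_injective _ (sub_left_injective), Finset.card_erase_of_mem hv, hcard']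
        rfl
      · intro a ha b hb hab
        obtain ⟨i, hi, rfl⟩ := Finset.mem_image.1 ha
        obtain ⟨j, hj, rfl⟩ := Finset.mem_image.1 hb
        obtain ⟨hiv, hi⟩ := Finset.mem_erase.1 hi
        obtain ⟨hjv, hj⟩ := Finset.mem_erase.1 hj
        have hij : i ≠ j := fun h => hab (by rw [h])
        have h := h3 i hi v hv j hj hiv hjv.symm hij
        rw [hG _ _ hiv, hG _ _ hjv.symm, hG _ _ hij] at h
        apply sgn2_neg_one
        have e : B (i - v) (j - v) = B i v + B v j + B i j := by
          simp only [map_sub, LinearMap.sub_apply, hB.1]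
          linear_combination hneg (B i v) + hneg (B v j)
        rw [e, sgn2_add, sgn2_add, h]
        linear_combination -sgn2_sq (B i j)
      · ext w
        simp only [Finset.mem_image, Finset.mem_insert, Finset.mem_erase]
        constructor
        · intro hw
          by_cases h : w = v
          · exact ⟨0, Or.inl rfl, by simp [h]⟩
          · exact ⟨w - v, Or.inr ⟨w, ⟨h, hw⟩, rfl⟩, by abel⟩
        · rintro ⟨a, rfl | ⟨b, ⟨-, hb⟩, rfl⟩, rfl⟩
          · simpa using hv
          · simpa using hb
    · rintro ⟨v, S, hScard, hS, rfl⟩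
      have hpos : 0 < 2 ^ J := by positivity
      have h0 : (0 : V) ∉ S := by
        intro h0
        obtain ⟨b, hb, hb0⟩ := Finset.exists_mem_ne (s := S) (by omega) 0
        have := hS 0 h0 b hb hb0.symm
        simp at this
      set K := (insert (0 : V) S).image (fun s => v + s) with hKdef
      have hKcard : K.card = 2 ^ J + 2 := by
        rw [hKdef, Finset.card_image_of_injective _ (add_right_injective v),
          Finset.card_insert_of_notMem h0]
        omega
      have hKS : ∀ k ∈ K, k ≠ v → k - v ∈ S := by
        intro k hk hkv
        obtain ⟨s, hs, rfl⟩ := Finset.mem_image.1 hk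
        rcases Finset.mem_insert.1 hs with rfl | hs
        · simp at hkv
        · simpa using hs
      have hb := simplex_backward (fun k : K => Φ k.1)
        (fun k => if k.1 = v then 1 else - sgn2 (B k.1 v))
        (fun i => by
          split_ifs
          · simp
          · rw [neg_mul_neg, sgn2_sq])
        (by rw [Fintype.card_coe]; omega)
        (by
          rintro ⟨i, hi⟩ ⟨j, hj⟩
          rw [Fintype.card_coe, hKcard]
          simp only [Subtype.mk.injEq]
          by_cases hij : i = j
          · subst hij
            rw [hdiag, if_pos rfl]
            split_ifs
            · push_cast; ring
            · rw [neg_mul_neg, sgn2_sq]; push_cast; ring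
          · rw [if_neg hij, hG _ _ hij]
            by_cases hiv : i = v
            · have hjv : ¬ j = v := fun h => hij (hiv.trans h.symm)
              rw [if_pos hiv, if_neg hjv, hiv, hanti v j]; ring
            · by_cases hjv : j = v
              · rw [if_pos hjv, if_neg hiv, hjv]; ring
              · rw [if_neg hiv, if_neg hjv]
                have h1 := hS _ (hKS i hi hiv) _ (hKS j hj hjv)
                  (fun h => hij (sub_left_injective h))
                have e : B i j = B i v + B j v + B (i - v) (j - v) := by
                  simp only [map_sub, LinearMap.sub_apply, hB.1]
                  rw [hanti v j]
                  ring
                rw [e, h1, sgn2_add, sgn2_add, show sgn2 1 = -1 by simp [sgn2]]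
                ring)
      refine ⟨hb.1, ?_⟩
      have h2 := hb.2
      rw [Fintype.card_coe] at h2
      rw [← h2, Set.image_eq_range]
      rfl
end
end

section
/- Let B be a symplectic form on a 2J-dimensional vector space V over F_2 and let Φ = (φ_v)_{v∈V} be the corresponding real symplectic ETF, i.e., ⟨φ_v, φ_v⟩ = 2^J + 1 for all v and ⟨φ_{v₁}, φ_{v₂}⟩ = (−1)^{B(v₁,v₂)} for v₁ ≠ v₂. If J > 2 then bin(Φ) is empty. If J = 2 then, for any symplectic basis (v₁,v₂,v₃,v₄) of V (meaning B(v₁,v₂) = B(v₃,v₄) = 1 and B(v_i,v_j) = 0 for all other pairs i < j), bin(Φ) consists exactly of the 16 translates v + {0, v₁, v₂, v₁+v₂+v₃, v₁+v₂+v₄, v₁+v₂+v₃+v₄} with v ∈ V; these translates are pairwise distinct and every pair of distinct points of V is contained in exactly 2 of them, so bin(Φ) forms a BIBD with parameters (V,K,Λ,R,B) = (16,6,2,6,16). -/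
open scoped BigOperators

noncomputable section

lemma aux_forward {E κ : Type*} [NormedAddCommGroup E] [InnerProductSpace ℝ E] [Fintype κ]
    [DecidableEq κ] (ψ : κ → E) (S A : ℝ) (hS : 0 < S)
    (hd : ∀ i, (inner ℝ (ψ i) (ψ i) : ℝ) = S)
    (ho : ∀ i j, i ≠ j → (inner ℝ (ψ i) (ψ j) : ℝ) ^ 2 = 1)
    (hA : ∀ i k, ∑ j, (inner ℝ (ψ i) (ψ j) : ℝ) * inner ℝ (ψ j) (ψ k) = A * inner ℝ (ψ i) (ψ k))
    (hr : Module.finrank ℝ (Submodule.span ℝ (Set.range ψ)) + 1 = Fintype.card κ) :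
    (Fintype.card κ : ℝ) = S + 1 ∧ ∀ i j k, i ≠ j → i ≠ k → j ≠ k →
      (inner ℝ (ψ i) (ψ j) : ℝ) * inner ℝ (ψ i) (ψ k) = - inner ℝ (ψ j) (ψ k) := by
  classical
  set L := Fintype.linearCombination ℝ ψ with hL
  have hker : Module.finrank ℝ (LinearMap.ker L) = 1 := by
    have h1 := LinearMap.finrank_range_add_finrank_ker L
    rw [hL, Fintype.range_linearCombination, ← hL] at h1
    simp only [Module.finrank_fintype_fun_eq_card] at h1
    omega
  let m : κ → κ → ℝ := fun i j => (if i = j then A else 0) - inner ℝ (ψ j) (ψ i)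
  have hLm : ∀ i, L (m i) = A • ψ i - ∑ j, (inner ℝ (ψ j) (ψ i) : ℝ) • ψ j := by
    intro i
    simp [hL, Fintype.linearCombination_apply, m, sub_smul, Finset.sum_sub_distrib, ite_smul]
  have hin : ∀ i k, (inner ℝ (ψ k) (L (m i)) : ℝ) = 0 := by
    intro i k
    rw [hLm, inner_sub_right, inner_smul_right, inner_sum, ← hA k i, sub_eq_zero]
    refine Finset.sum_congr rfl fun j _ => ?_
    rw [inner_smul_right]; ring
  have hmem : ∀ i, L (m i) = 0 := by
    intro i
    have : (inner ℝ (L (m i)) (L (m i)) : ℝ) = 0 := by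
      conv_lhs => rw [hL, Fintype.linearCombination_apply, sum_inner]
      refine Finset.sum_eq_zero fun j _ => ?_
      rw [inner_smul_left, ← Fintype.linearCombination_apply, ← hL, hin, mul_zero]
    exact inner_self_eq_zero.1 this
  obtain ⟨x, -, hx⟩ := finrank_eq_one_iff'.1 hker
  have hc : ∀ i, ∃ c : ℝ, ∀ j, m i j = c * x.1 j := by
    intro i
    obtain ⟨c, hc⟩ := hx ⟨m i, hmem i⟩
    refine ⟨c, fun j => ?_⟩
    have := congrArg (fun z => z.1 j) hc
    simpa using this.symm
  choose c hc using hc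
  have minor : ∀ i j k l, m i k * m j l = m i l * m j k := by
    intro i j k l
    rw [hc, hc, hc, hc]; ring
  have hmd : ∀ i, m i i = A - S := by intro i; simp only [m, if_true, hd]
  have hmo : ∀ i j, i ≠ j → m i j = - inner ℝ (ψ i) (ψ j) := by
    intro i j hij; simp [m, hij, real_inner_comm]
  have hdiag : ∀ i : κ, A * S = S ^ 2 + (Fintype.card κ - 1) := by
    intro i
    have h := hA i i
    rw [hd] at h
    rw [← h, ← Finset.add_sum_erase _ _ (Finset.mem_univ i), hd]
    have : ∑ j ∈ Finset.univ.erase i, (inner ℝ (ψ i) (ψ j) : ℝ) * inner ℝ (ψ j) (ψ i)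
        = ∑ j ∈ Finset.univ.erase i, 1 := by
      refine Finset.sum_congr rfl fun j hj => ?_
      rw [real_inner_comm (ψ i) (ψ j), ← sq]
      exact ho _ _ (Finset.ne_of_mem_erase hj).symm
    rw [this]
    have hp : 1 ≤ Fintype.card κ := by omega
    simp [Finset.card_erase_of_mem, Finset.card_univ, Nat.cast_sub hp, sq]
  have hn1 : Fintype.card κ ≠ 1 := by
    intro h1
    have h0 : Module.finrank ℝ (Submodule.span ℝ (Set.range ψ)) = 0 := by omega
    have : Module.Finite ℝ (Submodule.span ℝ (Set.range ψ)) :=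
      Module.Finite.span_of_finite ℝ (Set.finite_range ψ)
    rw [Submodule.finrank_eq_zero, Submodule.span_eq_bot] at h0
    obtain ⟨i, -⟩ := Fintype.card_eq_one_iff.1 h1
    have := hd i
    rw [h0 (ψ i) ⟨i, rfl⟩] at this
    simp at this; linarith
  have hn2 : 1 < Fintype.card κ := by omega
  obtain ⟨i0, j0, hij⟩ := Fintype.exists_pair_of_one_lt_card hn2
  have h1 := minor i0 j0 i0 j0
  rw [hmd, hmd, hmo _ _ hij, hmo _ _ hij.symm, real_inner_comm (ψ i0) (ψ j0), neg_mul_neg, ← sq,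
    ← sq, ho _ _ hij] at h1
  have h2 := hdiag i0
  have hn2' : (1:ℝ) < Fintype.card κ := by exact_mod_cast hn2
  have hAS : A - S = 1 := by
    have : 0 < A - S := by
      by_contra hneg
      nlinarith
    nlinarith
  refine ⟨by have : A = S + 1 := by linarith
             subst this; nlinarith, ?_⟩
  intro i j k hij hik hjk
  have h3 := minor i j i k
  rw [hmd, hAS, hmo _ _ hjk, hmo _ _ hik, hmo _ _ hij.symm, real_inner_comm (ψ i) (ψ j)] at h3
  linarith

lemma aux_backward {E κ : Type*} [NormedAddCommGroup E] [InnerProductSpace ℝ E] [Fintype κ]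
    [DecidableEq κ] (ψ : κ → E) (S : ℝ) (hS : 0 < S)
    (hd : ∀ i, (inner ℝ (ψ i) (ψ i) : ℝ) = S)
    (ho : ∀ i j, i ≠ j → (inner ℝ (ψ i) (ψ j) : ℝ) ^ 2 = 1)
    (hn : (Fintype.card κ : ℝ) = S + 1)
    (ht : ∀ i j k, i ≠ j → i ≠ k → j ≠ k →
      (inner ℝ (ψ i) (ψ j) : ℝ) * inner ℝ (ψ i) (ψ k) = - inner ℝ (ψ j) (ψ k)) :
    IsETF ℝ ψ ∧ Module.finrank ℝ (Submodule.span ℝ (Set.range ψ)) + 1 = Fintype.card κ := by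
  classical
  have hpos : 0 < Fintype.card κ := by
    have : (0:ℝ) < Fintype.card κ := by linarith
    exact_mod_cast this
  obtain ⟨i0⟩ := Fintype.card_pos_iff.1 hpos
  -- the sign vector
  let u : κ → ℝ := fun i => if i = i0 then -1 else inner ℝ (ψ i0) (ψ i)
  have hu : ∀ i, u i ^ 2 = 1 := by
    intro i
    by_cases h : i = i0
    · simp [u, h]
    · simp only [u, h, if_false]; exact ho _ _ (Ne.symm h)
  have hG : ∀ i j, (inner ℝ (ψ i) (ψ j) : ℝ) = (if i = j then S + 1 else 0) - u i * u j := by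
    intro i j
    by_cases hij : i = j
    · subst hij
      rw [hd, ← sq, hu]; simp
    · simp only [hij, if_false]
      by_cases hi : i = i0
      · subst hi
        simp [u, Ne.symm hij]
      · by_cases hj : j = i0
        · subst hj
          simp [u, hij, real_inner_comm]
        · simp only [u, hi, hj, if_false]
          rw [ht i0 i j (Ne.symm hi) (Ne.symm hj) hij]; ring
  have husum : ∑ j, u j * u j = S + 1 := by
    rw [← hn]
    simp [← sq, hu]
  refine ⟨⟨⟨S, hS, fun n => by simpa using hd n⟩, ⟨1, one_pos, fun i j hij => ?_⟩,
    ⟨S + 1, by linarith, fun i k => ?_⟩⟩, ?_⟩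
  · have := ho i j hij
    rw [Real.norm_eq_abs]
    rcases eq_or_eq_neg_of_sq_eq_sq (inner ℝ (ψ i) (ψ j) : ℝ) 1 (by rw [this]; norm_num) with h | h <;> simp [h]
  · simp only [hG, RCLike.ofReal_real_eq_id, id]
    have : ∀ j, ((if i = j then S + 1 else 0) - u i * u j) * ((if j = k then S + 1 else 0) - u j * u k)
       = (if i = j then (S + 1) * ((if j = k then S + 1 else 0) - u j * u k) else 0)
        - (if j = k then (S + 1) * (u i * u j) else 0) + u i * u k * (u j * u j) := by
      intro j; split_ifs <;> ring
    simp only [this, Finset.sum_add_distrib, Finset.sum_sub_distrib, ← Finset.mul_sum, husum]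
    simp
    ring
  · set L := Fintype.linearCombination ℝ ψ with hL
    have hinn : ∀ x : κ → ℝ, ∀ i, (inner ℝ (ψ i) (L x) : ℝ) = (S + 1) * x i - u i * ∑ j, u j * x j := by
      intro x i
      rw [hL, Fintype.linearCombination_apply, inner_sum]
      have : ∀ j, (inner ℝ (ψ i) (x j • ψ j) : ℝ)
         = (if i = j then (S + 1) * x j else 0) - u i * (u j * x j) := by
        intro j; rw [inner_smul_right, hG]; split_ifs <;> ring
      simp only [this, Finset.sum_sub_distrib, ← Finset.mul_sum]
      simp
    have hLu : L u = 0 := by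
      have : (inner ℝ (L u) (L u) : ℝ) = 0 := by
        conv_lhs => rw [hL, Fintype.linearCombination_apply, sum_inner]
        refine Finset.sum_eq_zero fun j _ => ?_
        rw [inner_smul_left, ← Fintype.linearCombination_apply, ← hL, hinn, husum]
        ring
      exact inner_self_eq_zero.1 this
    have hker : Module.finrank ℝ (LinearMap.ker L) = 1 := by
      rw [finrank_eq_one_iff']
      refine ⟨⟨u, hLu⟩, ?_, ?_⟩
      · intro h
        have := congrArg (fun z => z.1 i0) h
        simp [u] at this
      · rintro ⟨x, hx⟩
        refine ⟨(∑ j, u j * x j) / (S + 1), ?_⟩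
        ext i
        have h := hinn x i
        rw [LinearMap.mem_ker.1 hx, inner_zero_right] at h
        have : S + 1 ≠ 0 := by linarith
        change (∑ j, u j * x j) / (S + 1) * u i = x i
        field_simp
        linarith
    have h1 := LinearMap.finrank_range_add_finrank_ker L
    rw [hL, Fintype.range_linearCombination, ← hL] at h1
    simp only [Module.finrank_fintype_fun_eq_card] at h1
    omega

abbrev WW := ZMod 2 × ZMod 2 × ZMod 2 × ZMod 2

def bW (x y : WW) : ZMod 2 :=
  x.1 * y.2.1 + x.2.1 * y.1 + x.2.2.1 * y.2.2.2 + x.2.2.2 * y.2.2.1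

def sW : Finset WW :=
  {(0,0,0,0), (1,0,0,0), (0,1,0,0), (1,1,1,0), (1,1,0,1), (1,1,1,1)}

/-! Boolean model of `WW`, used so that the finite checks are cheap for the kernel. -/

abbrev BB := Bool × Bool × Bool × Bool

def allB (p : BB → Bool) : Bool :=
  p (false, false, false, false) && p (false, false, false, true) &&
  p (false, false, true, false) && p (false, false, true, true) &&
  p (false, true, false, false) && p (false, true, false, true) &&
  p (false, true, true, false) && p (false, true, true, true) &&
  p (true, false, false, false) && p (true, false, false, true) &&
  p (true, false, true, false) && p (true, false, true, true) &&
  p (true, true, false, false) && p (true, true, false, true) &&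
  p (true, true, true, false) && p (true, true, true, true)

lemma allB_spec {p : BB → Bool} (h : allB p = true) (x : BB) : p x = true := by
  simp only [allB, Bool.and_eq_true] at h
  obtain ⟨a, b, c, d⟩ := x
  cases a <;> cases b <;> cases c <;> cases d <;> simp only [h]

def anyB (p : BB → Bool) : Bool := !(allB fun x => !(p x))

lemma allB_of {p : BB → Bool} (h : ∀ x, p x = true) : allB p = true := by
  simp [allB, h]

lemma anyB_spec {p : BB → Bool} (h : anyB p = true) : ∃ x, p x = true := by
  by_contra hn
  push Not at hn
  have : allB (fun x => !(p x)) = true := allB_of fun x => by simpa using hn x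
  simp [anyB, this] at h

def addB (x y : BB) : BB :=
  (Bool.xor x.1 y.1, Bool.xor x.2.1 y.2.1, Bool.xor x.2.2.1 y.2.2.1, Bool.xor x.2.2.2 y.2.2.2)

def bB (x y : BB) : Bool :=
  Bool.xor (Bool.xor (Bool.xor (x.1 && y.2.1) (x.2.1 && y.1)) (x.2.2.1 && y.2.2.2)) (x.2.2.2 && y.2.2.1)

def sB : BB → Bool
  | (false, false, false, false) => true
  | (true, false, false, false) => true
  | (false, true, false, false) => true
  | (true, true, true, false) => true
  | (true, true, false, true) => true
  | (true, true, true, true) => true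
  | _ => false

def tB : ZMod 2 → Bool := fun x => decide (x = 1)

lemma tB_add : ∀ x y, tB (x + y) = Bool.xor (tB x) (tB y) := by decide

lemma tB_sub : ∀ x y, tB (x - y) = Bool.xor (tB x) (tB y) := by decide

lemma tB_mul : ∀ x y, tB (x * y) = (tB x && tB y) := by decide

lemma tB_inj : ∀ x y, tB x = tB y → x = y := by decide

def TB (x : WW) : BB := (tB x.1, tB x.2.1, tB x.2.2.1, tB x.2.2.2)

lemma TB_inj : Function.Injective TB := by
  rintro ⟨a, b, c, d⟩ ⟨a', b', c', d'⟩ h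
  simp only [TB, Prod.mk.injEq] at h
  rw [tB_inj _ _ h.1, tB_inj _ _ h.2.1, tB_inj _ _ h.2.2.1, tB_inj _ _ h.2.2.2]

lemma TB_bij : Function.Bijective TB :=
  (Fintype.bijective_iff_injective_and_card TB).2 ⟨TB_inj, rfl⟩

lemma TB_sub (x y : WW) : TB (x - y) = addB (TB x) (TB y) := by
  simp only [TB, addB, Prod.fst_sub, Prod.snd_sub, tB_sub]

lemma bW_iff (x y : WW) : bW x y = 1 ↔ bB (TB x) (TB y) = true := by
  have : tB (bW x y) = bB (TB x) (TB y) := by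
    simp only [bW, bB, TB, tB_add, tB_mul]
  rw [← this]; simp [tB]

lemma sW_iff (x : WW) : x ∈ sW ↔ sB (TB x) = true := by
  have h : ∀ z : ZMod 2, z = 0 ∨ z = 1 := by decide
  have h0 : tB 0 = false := rfl
  have h1 : tB 1 = true := rfl
  obtain ⟨a, b, c, d⟩ := x
  rcases h a with rfl | rfl <;> rcases h b with rfl | rfl <;> rcases h c with rfl | rfl <;>
    rcases h d with rfl | rfl <;> simp [sW, TB, h0, h1, sB]

def zB : BB := (false, false, false, false)

def neB (d : BB) : Bool := d.1 || d.2.1 || d.2.2.1 || d.2.2.2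

lemma addB_ne {x y : BB} (h : x ≠ y) : neB (addB x y) = true := by
  by_contra hn
  apply h
  obtain ⟨a, b, c, d⟩ := x
  obtain ⟨a', b', c', d'⟩ := y
  simpa [neB, addB, and_assoc] using hn

lemma addB_self (x : BB) : addB x x = zB := by simp [addB, zB]

lemma addB_assoc (x y z : BB) : addB (addB x y) z = addB x (addB y z) := by simp [addB]

lemma addB_comm (x y : BB) : addB x y = addB y x := by simp [addB, Bool.xor_comm]

lemma addB_zB (x : BB) : addB x zB = x := by simp [addB, zB]

lemma B_inj : (allB fun d => !(neB d) || !(allB fun x => !(sB x) || sB (addB x d))) = true := by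
  rfl

lemma W_inj (v w : WW) (h : ∀ x, x - v ∈ sW ↔ x - w ∈ sW) : v = w := by
  apply TB_inj
  by_contra hne
  have h2 := addB_ne hne
  have h1 := allB_spec B_inj (addB (TB v) (TB w))
  rw [h2] at h1
  simp only [Bool.not_true, Bool.false_or] at h1
  have h3 : (allB fun x => !(sB x) || sB (addB x (addB (TB v) (TB w)))) = true := by
    apply allB_of
    intro x
    obtain ⟨y, hy⟩ := TB_bij.2 (addB x (TB v))
    have hy' := (h y).1
    rw [sW_iff, sW_iff, TB_sub, TB_sub, hy, addB_assoc, addB_self, addB_zB, addB_assoc] at hy'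
    cases hx : sB x with
    | false => simp
    | true => simp [hy' hx]
  rw [h3] at h1
  simp at h1

def cntB (p : BB → Bool) : ℕ :=
  (p (false, false, false, false)).toNat + (p (false, false, false, true)).toNat +
  (p (false, false, true, false)).toNat + (p (false, false, true, true)).toNat +
  (p (false, true, false, false)).toNat + (p (false, true, false, true)).toNat +
  (p (false, true, true, false)).toNat + (p (false, true, true, true)).toNat +
  (p (true, false, false, false)).toNat + (p (true, false, false, true)).toNat +
  (p (true, false, true, false)).toNat + (p (true, false, true, true)).toNat +
  (p (true, true, false, false)).toNat + (p (true, true, false, true)).toNat +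
  (p (true, true, true, false)).toNat + (p (true, true, true, true)).toNat

lemma cntB_spec (p : BB → Bool) : (Finset.univ.filter (fun u : BB => p u = true)).card = cntB p := by
  have h : ∀ b : Bool, (if b = true then 1 else 0) = b.toNat := by decide
  rw [Finset.card_filter]
  simp only [Fintype.sum_prod_type, Fintype.sum_bool, h, cntB]
  ring

lemma B_pair_aux : (allB fun d => !(neB d) ||
    Nat.beq (cntB fun u => sB u && sB (addB u d)) 2) = true := by
  rfl

lemma B_pair (d : BB) (hd : neB d = true) :
    (Finset.univ.filter (fun u : BB => sB u = true ∧ sB (addB u d) = true)).card = 2 := by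
  have h := allB_spec B_pair_aux d
  simp only [hd, Bool.not_true, Bool.false_or] at h
  rw [← Nat.eq_of_beq_eq_true h, ← cntB_spec]
  simp only [Bool.and_eq_true]

lemma W_pair (x y : WW) (hxy : x ≠ y) :
    (Finset.univ.filter (fun v : WW => x - v ∈ sW ∧ y - v ∈ sW)).card = 2 := by
  refine Eq.trans ?_ (B_pair _ (addB_ne (TB_inj.ne hxy)))
  refine Finset.card_equiv ((Equiv.subLeft x).trans (Equiv.ofBijective TB TB_bij)) ?_
  intro v
  simp only [Finset.mem_filter, Finset.mem_univ, true_and, sW_iff, Equiv.trans_apply,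
    Equiv.subLeft_apply, Equiv.ofBijective_apply, TB_sub]
  rw [addB_comm (TB x) (TB y), ← addB_assoc, addB_comm _ (TB y), addB_comm (TB x) (TB v),
    addB_assoc (TB y), addB_assoc (TB v), addB_self, addB_zB]

lemma B_good : (allB fun x => !(sB x) || allB fun y => !(sB y && neB (addB x y)) ||
    allB fun z => !(sB z && (neB (addB x z) && neB (addB y z))) ||
      Bool.xor (Bool.xor (bB x y) (bB x z)) (bB y z)) = true := by
  rfl

lemma W_good (x : WW) (hx : x ∈ sW) (y : WW) (hy : y ∈ sW) (z : WW) (hz : z ∈ sW) (hxy : x ≠ y)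
    (hxz : x ≠ z) (hyz : y ≠ z) : bW x y + bW x z + bW y z = 1 := by
  have h1 := addB_ne (TB_inj.ne hxy)
  have h2 := addB_ne (TB_inj.ne hxz)
  have h3 := addB_ne (TB_inj.ne hyz)
  rw [sW_iff] at hx hy hz
  have h := allB_spec B_good (TB x)
  simp only [hx, Bool.not_true, Bool.false_or] at h
  have h := allB_spec h (TB y)
  simp only [hy, h1, Bool.and_self, Bool.not_true, Bool.false_or] at h
  have h := allB_spec h (TB z)
  simp only [hz, h2, h3, Bool.and_self, Bool.not_true, Bool.false_or] at h
  have e : ∀ x y : WW, bB (TB x) (TB y) = tB (bW x y) := by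
    intro x y
    simp only [bW, bB, TB, tB_add, tB_mul]
  rw [e, e, e, ← tB_add, ← tB_add] at h
  simpa [tB] using h

lemma B_clique : (allB fun a => allB fun b => !(bB a b) ||
    allB fun c => !(bB a c && bB b c) ||
    allB fun d => !(bB a d && (bB b d && bB c d)) ||
    allB fun e => !(bB a e && (bB b e && (bB c e && bB d e))) ||
    anyB fun v => sB v && (sB (addB a v) && (sB (addB b v) && (sB (addB c v) &&
      (sB (addB d v) && sB (addB e v)))))) = true := by
  rfl

lemma W_clique (a b : WW) (hab : bW a b = 1) (c : WW) (hac : bW a c = 1) (hbc : bW b c = 1)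
    (d : WW) (had : bW a d = 1) (hbd : bW b d = 1) (hcd : bW c d = 1)
    (e : WW) (hae : bW a e = 1) (hbe : bW b e = 1) (hce : bW c e = 1) (hde : bW d e = 1) :
    ∃ v, 0 - v ∈ sW ∧ a - v ∈ sW ∧ b - v ∈ sW ∧ c - v ∈ sW ∧ d - v ∈ sW ∧ e - v ∈ sW := by
  rw [bW_iff] at *
  have h := allB_spec (allB_spec B_clique (TB a)) (TB b)
  simp only [hab, Bool.not_true, Bool.false_or] at h
  have h := allB_spec h (TB c)
  simp only [hac, hbc, Bool.and_self, Bool.not_true, Bool.false_or] at h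
  have h := allB_spec h (TB d)
  simp only [had, hbd, hcd, Bool.and_self, Bool.not_true, Bool.false_or] at h
  have h := allB_spec h (TB e)
  simp only [hae, hbe, hce, hde, Bool.and_self, Bool.not_true, Bool.false_or] at h
  obtain ⟨v', hv⟩ := anyB_spec h
  obtain ⟨v, rfl⟩ := TB_bij.2 v'
  simp only [Bool.and_eq_true] at hv
  refine ⟨v, ?_⟩
  simp only [sW_iff, TB_sub]
  refine ⟨?_, hv.2⟩
  have : TB 0 = zB := rfl
  rw [this, addB_comm, addB_zB]
  exact hv.1

lemma sign_iff (a b c : ZMod 2) :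
    (-1 : ℝ) ^ a.val * (-1 : ℝ) ^ b.val = - (-1 : ℝ) ^ c.val ↔ a + b + c = 1 := by
  have h0 : (0 : ZMod 2).val = 0 := rfl
  have h1 : (1 : ZMod 2).val = 1 := rfl
  have h : ∀ x : ZMod 2, x = 0 ∨ x = 1 := by decide
  have e1 : (1 + 1 : ZMod 2) = 0 := by decide
  rcases h a with rfl | rfl <;> rcases h b with rfl | rfl <;> rcases h c with rfl | rfl <;>
    simp [h0, h1, e1] <;> norm_num

lemma mem_binder_iff {J : ℕ} {V : Type*} [AddCommGroup V] [Module (ZMod 2) V] [Fintype V]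
    [DecidableEq V] (B : V →ₗ[ZMod 2] V →ₗ[ZMod 2] ZMod 2)
    {E : Type*} [NormedAddCommGroup E] [InnerProductSpace ℝ E] (Φ : V → E)
    (hdiag : ∀ v, (inner ℝ (Φ v) (Φ v) : ℝ) = 2 ^ J + 1)
    (hoff : ∀ v₁ v₂ : V, v₁ ≠ v₂ →
      (inner ℝ (Φ v₁) (Φ v₂) : ℝ) = (-1 : ℝ) ^ (B v₁ v₂).val) (K : Finset V) :
    K ∈ binder ℝ Φ ↔ K.card = 2 ^ J + 2 ∧ ∀ x ∈ K, ∀ y ∈ K, ∀ z ∈ K, x ≠ y → x ≠ z → y ≠ z →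
      B x y + B x z + B y z = 1 := by
  have hS : (0 : ℝ) < 2 ^ J + 1 := by positivity
  have hrange : Φ '' (K : Set V) = Set.range (fun k : K => Φ k.1) := by
    ext e; simp
  have hcard : Fintype.card K = K.card := by simp
  have ho : ∀ i j : K, i ≠ j → (inner ℝ (Φ i.1) (Φ j.1) : ℝ) ^ 2 = 1 := by
    intro i j hij
    rw [hoff _ _ (fun h => hij (Subtype.ext h)), ← pow_mul, mul_comm, pow_mul]
    simp
  have htr : (∀ i j k : K, i ≠ j → i ≠ k → j ≠ k →
      (inner ℝ (Φ i.1) (Φ j.1) : ℝ) * inner ℝ (Φ i.1) (Φ k.1) = - inner ℝ (Φ j.1) (Φ k.1)) ↔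
      ∀ x ∈ K, ∀ y ∈ K, ∀ z ∈ K, x ≠ y → x ≠ z → y ≠ z → B x y + B x z + B y z = 1 := by
    constructor
    · intro h x hx y hy z hz hxy hxz hyz
      have := h ⟨x, hx⟩ ⟨y, hy⟩ ⟨z, hz⟩ (by simpa using hxy) (by simpa using hxz) (by simpa using hyz)
      rw [hoff _ _ hxy, hoff _ _ hxz, hoff _ _ hyz] at this
      exact (sign_iff _ _ _).1 this
    · rintro h ⟨x, hx⟩ ⟨y, hy⟩ ⟨z, hz⟩ hxy hxz hyz
      simp only [ne_eq, Subtype.mk.injEq] at hxy hxz hyz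
      rw [hoff _ _ hxy, hoff _ _ hxz, hoff _ _ hyz]
      exact (sign_iff _ _ _).2 (h x hx y hy z hz hxy hxz hyz)
  have hcc : ((Fintype.card K : ℝ) = 2 ^ J + 1 + 1) ↔ K.card = 2 ^ J + 2 := by
    rw [hcard, add_assoc, one_add_one_eq_two]
    exact_mod_cast Iff.rfl
  rw [← htr, ← hcc]
  constructor
  · rintro ⟨⟨-, -, A, -, hA⟩, hr⟩
    rw [hrange, ← hcard] at hr
    exact aux_forward (fun k : K => Φ k.1) _ A hS (fun i => hdiag _) ho (by simpa using hA) hr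
  · rintro ⟨hn, ht⟩
    have := aux_backward (fun k : K => Φ k.1) _ hS (fun i => hdiag _) ho hn ht
    refine ⟨this.1, ?_⟩
    rw [hrange, ← hcard]
    exact this.2

lemma symp_symm {V : Type*} [AddCommGroup V] [Module (ZMod 2) V]
    (B : V →ₗ[ZMod 2] V →ₗ[ZMod 2] ZMod 2) (hB : ∀ v, B v v = 0) (x y : V) : B x y = B y x := by
  have h := hB (x + y)
  simp only [map_add, LinearMap.add_apply, hB, zero_add, add_zero] at h
  have : ∀ a b : ZMod 2, b + a = 0 → a = b := by decide
  exact this _ _ (by simpa [add_comm] using h)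

lemma zmod2_sub {V : Type*} [AddCommGroup V] [Module (ZMod 2) V] (x y : V) : x - y = x + y := by
  have : (2 : ZMod 2) • y = 0 := by
    rw [show (2 : ZMod 2) = 0 from rfl, zero_smul]
  rw [two_smul] at this
  rw [sub_eq_iff_eq_add, add_assoc, this, add_zero]

/-- Translating by a point of the set turns the triple condition into a pairwise one. -/
lemma triple_pair {V : Type*} [AddCommGroup V] [Module (ZMod 2) V]
    (B : V →ₗ[ZMod 2] V →ₗ[ZMod 2] ZMod 2) (hB : ∀ v, B v v = 0) (p x y : V)
    (h : B p x + B p y + B x y = 1) : B (x - p) (y - p) = 1 := by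
  simp only [map_sub, LinearMap.sub_apply, hB]
  rw [symp_symm B hB x p]
  have : ∀ a b c : ZMod 2, a + b + c = 1 → c - b - (a - 0) = 1 := by decide
  exact this _ _ _ h

/-- A set with the triple condition has at most `dim V + 2` points. -/
lemma triple_card {V : Type*} [AddCommGroup V] [Module (ZMod 2) V] [Fintype V] [DecidableEq V]
    (B : V →ₗ[ZMod 2] V →ₗ[ZMod 2] ZMod 2) (hB : ∀ v, B v v = 0) (K : Finset V)
    (hK : ∀ x ∈ K, ∀ y ∈ K, ∀ z ∈ K, x ≠ y → x ≠ z → y ≠ z → B x y + B x z + B y z = 1) :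
    K.card ≤ Module.finrank (ZMod 2) V + 2 := by
  by_contra hlt
  push Not at hlt
  obtain ⟨p, hp, q, hq, hpq⟩ := Finset.one_lt_card.1 (show 1 < K.card by omega)
  set T := (K.erase p).erase q with hT
  have hTc : T.card + 2 = K.card := by
    have h1 := Finset.card_erase_add_one (show q ∈ K.erase p from Finset.mem_erase.2 ⟨hpq.symm, hq⟩)
    have h2 := Finset.card_erase_add_one hp
    rw [← hT] at h1
    omega
  have hli : LinearIndependent (ZMod 2) (fun t : T => t.1 - p) := by
    rw [Fintype.linearIndependent_iff]
    intro c hc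
    have hTm : ∀ t : T, t.1 ∈ K ∧ t.1 ≠ p ∧ t.1 ≠ q := by
      rintro ⟨t, ht⟩
      simp only [hT, Finset.mem_erase] at ht
      exact ⟨ht.2.2, ht.2.1, ht.1⟩
    have hs : ∑ t, c t = 0 := by
      have h := congrArg (B (q - p)) hc
      rw [map_sum, map_zero] at h
      rw [← h]
      refine Finset.sum_congr rfl fun t _ => ?_
      obtain ⟨a, b, d⟩ := hTm t
      rw [map_smul, triple_pair B hB p q t.1 (hK _ hp _ hq _ a hpq b.symm d.symm)]
      simp
    intro j
    have h := congrArg (B (j.1 - p)) hc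
    rw [map_sum, map_zero, ← Finset.add_sum_erase _ _ (Finset.mem_univ j), map_smul, hB] at h
    rw [← Finset.add_sum_erase _ _ (Finset.mem_univ j)] at hs
    have : ∑ t ∈ Finset.univ.erase j, B (j.1 - p) (c t • (t.1 - p)) = ∑ t ∈ Finset.univ.erase j, c t := by
      refine Finset.sum_congr rfl fun t ht => ?_
      obtain ⟨a, b, d⟩ := hTm t
      obtain ⟨a', b', d'⟩ := hTm j
      have hne : j.1 ≠ t.1 := fun h => (Finset.ne_of_mem_erase ht) (Subtype.ext h.symm)
      rw [map_smul, triple_pair B hB p j.1 t.1 (hK _ hp _ a' _ a b'.symm b.symm hne)]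
      simp
    rw [this] at h
    simp only [smul_zero, zero_add] at h
    rw [h, add_zero] at hs
    exact hs
  have := hli.fintype_card_le_finrank
  simp only [Fintype.card_coe] at this
  omega

lemma pow_gt (J : ℕ) (hJ : 2 < J) : 2 * J < 2 ^ J := by
  induction J, hJ using Nat.le_induction with
  | base => norm_num
  | succ n hn ih => rw [pow_succ]; omega

lemma W_nondeg (x y : WW) (h1 : bW x (1,0,0,0) = bW y (1,0,0,0))
    (h2 : bW x (0,1,0,0) = bW y (0,1,0,0)) (h3 : bW x (0,0,1,0) = bW y (0,0,1,0))
    (h4 : bW x (0,0,0,1) = bW y (0,0,0,1)) : x = y := by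
  simp only [bW, mul_zero, mul_one, add_zero, zero_add] at h1 h2 h3 h4
  exact Prod.ext h2 (Prod.ext h1 (Prod.ext h4 h3))

lemma part_two
    {V : Type*} [AddCommGroup V] [Module (ZMod 2) V] [Fintype V] [DecidableEq V]
    (hdim : Module.finrank (ZMod 2) V = 2 * 2)
    (B : V →ₗ[ZMod 2] V →ₗ[ZMod 2] ZMod 2) (hB : ∀ v, B v v = 0)
    {E : Type*} [NormedAddCommGroup E] [InnerProductSpace ℝ E]
    (Φ : V → E)
    (hdiag : ∀ v, (inner ℝ (Φ v) (Φ v) : ℝ) = 2 ^ 2 + 1)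
    (hoff : ∀ v₁ v₂ : V, v₁ ≠ v₂ →
      (inner ℝ (Φ v₁) (Φ v₂) : ℝ) = (-1 : ℝ) ^ (B v₁ v₂).val)
    (v₁ v₂ v₃ v₄ : V) (h12 : B v₁ v₂ = 1) (h34 : B v₃ v₄ = 1) (h13 : B v₁ v₃ = 0)
    (h14 : B v₁ v₄ = 0) (h23 : B v₂ v₃ = 0) (h24 : B v₂ v₄ = 0) :
      (binder ℝ Φ = {K : Finset V | ∃ v : V,
        K = ({0, v₁, v₂, v₁ + v₂ + v₃, v₁ + v₂ + v₄, v₁ + v₂ + v₃ + v₄} : Finset V).image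
              (fun s => v + s)}) ∧
      (∀ v w : V,
        ({0, v₁, v₂, v₁ + v₂ + v₃, v₁ + v₂ + v₄, v₁ + v₂ + v₃ + v₄} : Finset V).image
            (fun s => v + s) =
          ({0, v₁, v₂, v₁ + v₂ + v₃, v₁ + v₂ + v₄, v₁ + v₂ + v₃ + v₄} : Finset V).image
            (fun s => w + s) → v = w) ∧
      Fintype.card V = 16 ∧
      (∀ v : V,
        (({0, v₁, v₂, v₁ + v₂ + v₃, v₁ + v₂ + v₄, v₁ + v₂ + v₃ + v₄} : Finset V).image
          (fun s => v + s)).card = 6) ∧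
      (∀ x y : V, x ≠ y →
        (Finset.univ.filter (fun v : V =>
          x ∈ ({0, v₁, v₂, v₁ + v₂ + v₃, v₁ + v₂ + v₄, v₁ + v₂ + v₃ + v₄} : Finset V).image
                (fun s => v + s) ∧
          y ∈ ({0, v₁, v₂, v₁ + v₂ + v₃, v₁ + v₂ + v₄, v₁ + v₂ + v₃ + v₄} : Finset V).image
                (fun s => v + s))).card = 2) := by
  have hcard : Fintype.card V = 16 := by
    rw [← Nat.card_eq_fintype_card, Module.natCard_eq_pow_finrank (K := ZMod 2) (V := V), hdim]
    simp
  let f : WW →ₗ[ZMod 2] V :=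
    { toFun := fun w => w.1 • v₁ + w.2.1 • v₂ + w.2.2.1 • v₃ + w.2.2.2 • v₄
      map_add' := by intro x y; simp only [Prod.fst_add, Prod.snd_add, add_smul]; abel
      map_smul' := by
        intro c x
        simp only [Prod.smul_fst, Prod.smul_snd, smul_add, smul_smul, smul_eq_mul, RingHom.id_apply] }
  have hf : ∀ w : WW, f w = w.1 • v₁ + w.2.1 • v₂ + w.2.2.1 • v₃ + w.2.2.2 • v₄ := fun _ => rfl
  have h21 : B v₂ v₁ = 1 := by rw [symp_symm B hB, h12]
  have h43 : B v₄ v₃ = 1 := by rw [symp_symm B hB, h34]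
  have h31 : B v₃ v₁ = 0 := by rw [symp_symm B hB, h13]
  have h41 : B v₄ v₁ = 0 := by rw [symp_symm B hB, h14]
  have h32 : B v₃ v₂ = 0 := by rw [symp_symm B hB, h23]
  have h42 : B v₄ v₂ = 0 := by rw [symp_symm B hB, h24]
  have hBf : ∀ x y, B (f x) (f y) = bW x y := by
    intro x y
    simp only [hf, map_add, map_smul, LinearMap.add_apply, LinearMap.smul_apply, hB, h12, h13, h14,
      h21, h23, h24, h31, h32, h34, h41, h42, h43, smul_eq_mul, bW]
    ring
  have hinj : Function.Injective f := by
    intro x y hxy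
    apply W_nondeg <;> rw [← hBf, ← hBf, hxy]
  have hbij : Function.Bijective f := by
    rw [Fintype.bijective_iff_injective_and_card]
    refine ⟨hinj, ?_⟩
    rw [hcard]; rfl
  let e : WW ≃ₗ[ZMod 2] V := LinearEquiv.ofBijective f hbij
  have he : ∀ w, e w = f w := fun _ => rfl
  have hBe : ∀ x y, B x y = bW (e.symm x) (e.symm y) := by
    intro x y
    rw [← hBf, ← he, ← he, e.apply_symm_apply, e.apply_symm_apply]
  have hS : ({0, v₁, v₂, v₁ + v₂ + v₃, v₁ + v₂ + v₄, v₁ + v₂ + v₃ + v₄} : Finset V) =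
      sW.image e := by
    simp [sW, Finset.image_insert, he, hf]
  rw [hS]
  have hmem : ∀ v x : V, x ∈ (sW.image e).image (fun s => v + s) ↔ e.symm x - e.symm v ∈ sW := by
    intro v x
    simp only [Finset.mem_image]
    constructor
    · rintro ⟨_, ⟨s, hs, rfl⟩, rfl⟩
      simpa using hs
    · intro h
      exact ⟨_, ⟨_, h, rfl⟩, by simp⟩
  have hc6 : ∀ v : V, ((sW.image e).image (fun s => v + s)).card = 6 := by
    intro v
    rw [Finset.card_image_of_injective _ (add_right_injective v),
      Finset.card_image_of_injective _ e.injective]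
    rfl
  refine ⟨?_, ?_, hcard, hc6, ?_⟩
  · ext K
    rw [mem_binder_iff B Φ hdiag hoff K, Set.mem_ofPred_eq]
    constructor
    · rintro ⟨hc, ht⟩
      let g : Fin 6 → V := fun i => ((Finset.equivFinOfCardEq hc).symm i).1
      have hgK : ∀ i, g i ∈ K := fun i => ((Finset.equivFinOfCardEq hc).symm i).2
      have hgi : Function.Injective g :=
        Subtype.val_injective.comp (Finset.equivFinOfCardEq hc).symm.injective
      have hgs : ∀ x ∈ K, ∃ i, g i = x := fun x hx =>
        ⟨Finset.equivFinOfCardEq hc ⟨x, hx⟩, by simp [g]⟩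
      have hp : ∀ i j : Fin 6, i ≠ 0 → j ≠ 0 → i ≠ j →
          bW (e.symm (g i - g 0)) (e.symm (g j - g 0)) = 1 := by
        intro i j hi hj hij
        rw [← hBe]
        exact triple_pair B hB _ _ _ (ht _ (hgK 0) _ (hgK i) _ (hgK j) (hgi.ne hi.symm)
          (hgi.ne hj.symm) (hgi.ne hij))
      obtain ⟨v, k0, k1, k2, k3, k4, k5⟩ := W_clique _ _ (hp 1 2 (by decide) (by decide) (by decide))
        _ (hp 1 3 (by decide) (by decide) (by decide)) (hp 2 3 (by decide) (by decide) (by decide))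
        _ (hp 1 4 (by decide) (by decide) (by decide)) (hp 2 4 (by decide) (by decide) (by decide))
        (hp 3 4 (by decide) (by decide) (by decide))
        _ (hp 1 5 (by decide) (by decide) (by decide)) (hp 2 5 (by decide) (by decide) (by decide))
        (hp 3 5 (by decide) (by decide) (by decide)) (hp 4 5 (by decide) (by decide) (by decide))
      have key : ∀ i, e.symm (g i - g 0) - v ∈ sW := by
        intro i
        fin_cases i
        · simpa using k0
        · exact k1
        · exact k2
        · exact k3
        · exact k4
        · exact k5
      refine ⟨e v + g 0, Finset.eq_of_subset_of_card_le ?_ ?_⟩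
      · intro x hx
        obtain ⟨i, rfl⟩ := hgs x hx
        rw [hmem]
        have := key i
        rw [map_sub, sub_sub, add_comm] at this
        simpa using this
      · rw [hc6, hc]; norm_num
    · rintro ⟨v, rfl⟩
      refine ⟨by rw [hc6]; norm_num, ?_⟩
      simp only [Finset.mem_image]
      rintro _ ⟨_, ⟨x, hx, rfl⟩, rfl⟩ _ ⟨_, ⟨y, hy, rfl⟩, rfl⟩ _ ⟨_, ⟨z, hz, rfl⟩, rfl⟩ hxy hxz hyz
      have h := W_good x hx y hy z hz (by rintro rfl; exact hxy rfl) (by rintro rfl; exact hxz rfl)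
        (by rintro rfl; exact hyz rfl)
      rw [← hBf, ← hBf, ← hBf] at h
      simp only [map_add, LinearMap.add_apply, hB, he]
      rw [symp_symm B hB (f x) v, symp_symm B hB (f y) v]
      generalize B (f x) (f y) = a at *
      generalize B (f x) (f z) = b at *
      generalize B (f y) (f z) = c at *
      generalize B v (f x) = p
      generalize B v (f y) = q
      generalize B v (f z) = r
      clear * - h
      revert a b c p q r
      decide
  · intro v w h
    apply e.symm.injective
    apply W_inj
    intro x
    have := hmem v (e x)
    rw [h, hmem] at this
    simpa using this.symm
  · intro x y hxy
    refine Eq.trans ?_ (W_pair (e.symm x) (e.symm y) (e.symm.injective.ne hxy))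
    refine Finset.card_equiv e.symm.toEquiv ?_
    intro v
    simp only [Finset.mem_filter, Finset.mem_univ, true_and, hmem]
    rfl

/-- The binder of the real symplectic ETF over `F₂` is empty when
`J > 2`; when `J = 2` it consists exactly of the 16 translates of
`{0, v₁, v₂, v₁+v₂+v₃, v₁+v₂+v₄, v₁+v₂+v₃+v₄}` for any symplectic basis
`(v₁,v₂,v₃,v₄)`, these translates are pairwise distinct, and every pair of
distinct points lies in exactly 2 of them, so the binder forms a BIBD with
parameters `(16,6,2,6,16)`. -/
theorem binder_of_real_symplectic_ETF
    {J : ℕ} (hJ : 0 < J)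
    {V : Type*} [AddCommGroup V] [Module (ZMod 2) V] [Fintype V] [DecidableEq V]
    (hdim : Module.finrank (ZMod 2) V = 2 * J)
    (B : V →ₗ[ZMod 2] V →ₗ[ZMod 2] ZMod 2) (hB : IsSymplectic B)
    {E : Type*} [NormedAddCommGroup E] [InnerProductSpace ℝ E]
    (Φ : V → E)
    (hdiag : ∀ v, (inner ℝ (Φ v) (Φ v) : ℝ) = 2 ^ J + 1)
    (hoff : ∀ v₁ v₂ : V, v₁ ≠ v₂ →
      (inner ℝ (Φ v₁) (Φ v₂) : ℝ) = (-1 : ℝ) ^ (B v₁ v₂).val) :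
    (2 < J → binder ℝ Φ = ∅) ∧
    (J = 2 → ∀ v₁ v₂ v₃ v₄ : V,
      B v₁ v₂ = 1 → B v₃ v₄ = 1 →
      B v₁ v₃ = 0 → B v₁ v₄ = 0 → B v₂ v₃ = 0 → B v₂ v₄ = 0 →
      (binder ℝ Φ = {K : Finset V | ∃ v : V,
        K = ({0, v₁, v₂, v₁ + v₂ + v₃, v₁ + v₂ + v₄, v₁ + v₂ + v₃ + v₄} : Finset V).image
              (fun s => v + s)}) ∧
      (∀ v w : V,
        ({0, v₁, v₂, v₁ + v₂ + v₃, v₁ + v₂ + v₄, v₁ + v₂ + v₃ + v₄} : Finset V).image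
            (fun s => v + s) =
          ({0, v₁, v₂, v₁ + v₂ + v₃, v₁ + v₂ + v₄, v₁ + v₂ + v₃ + v₄} : Finset V).image
            (fun s => w + s) → v = w) ∧
      Fintype.card V = 16 ∧
      (∀ v : V,
        (({0, v₁, v₂, v₁ + v₂ + v₃, v₁ + v₂ + v₄, v₁ + v₂ + v₃ + v₄} : Finset V).image
          (fun s => v + s)).card = 6) ∧
      (∀ x y : V, x ≠ y →
        (Finset.univ.filter (fun v : V =>
          x ∈ ({0, v₁, v₂, v₁ + v₂ + v₃, v₁ + v₂ + v₄, v₁ + v₂ + v₃ + v₄} : Finset V).image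
                (fun s => v + s) ∧
          y ∈ ({0, v₁, v₂, v₁ + v₂ + v₃, v₁ + v₂ + v₄, v₁ + v₂ + v₃ + v₄} : Finset V).image
                (fun s => v + s))).card = 2)) := by
  constructor
  · intro hJ2
    ext K
    rw [mem_binder_iff B Φ hdiag hoff K]
    simp only [Set.mem_empty_iff_false, iff_false]
    rintro ⟨hc, ht⟩
    have h1 := triple_card B hB.1 K ht
    have h2 := pow_gt J hJ2
    omega
  · rintro rfl v₁ v₂ v₃ v₄ h12 h34 h13 h14 h23 h24
    exact part_two hdim B hB.1 Φ hdiag hoff v₁ v₂ v₃ v₄ h12 h34 h13 h14 h23 h24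
end
end

section
/- Let B be a symplectic form on a 2J-dimensional vector space V over F_2 with J ≥ 2, and let D ⊆ V be an affine quadric with #D = 2^{J−1}(2^J+1), so #(V∖D) = 2^{J−1}(2^J−1). Define the real symmetric matrix G, with rows and columns indexed by V∖D, by G(v,v) = 2^J + 1 and G(v₁,v₂) = (−1)^{B(v₁,v₂)} for v₁ ≠ v₂ (the exponent being the value of B in F_2 = {0,1}). Then G² = 3·2^{J−1}·G; consequently G is positive semidefinite of rank (2^{2J}−1)/3, and G is the Gram matrix of an ETF of 2^{J−1}(2^J−1) vectors for a real inner product space of dimension (2^{2J}−1)/3. -/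
open scoped BigOperators

noncomputable section

/-- `Q` is a quadratic form yielding the bilinear form `B` over `F₂`. -/
def YieldsForm {V : Type*} [AddCommGroup V] [Module (ZMod 2) V]
    (B : V →ₗ[ZMod 2] V →ₗ[ZMod 2] ZMod 2) (Q : V → ZMod 2) : Prop :=
  ∀ v₁ v₂ : V, Q (v₁ + v₂) + Q v₁ + Q v₂ = B v₁ v₂

/-- The quadric of a quadratic form: its set of zeros. -/
def quadric {V : Type*} (Q : V → ZMod 2) : Set V := {v | Q v = 0}

/-- A subset is an affine quadric if it or its complement is the quadric of
some quadratic form yielding `B`. -/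
def IsAffineQuadric {V : Type*} [AddCommGroup V] [Module (ZMod 2) V]
    (B : V →ₗ[ZMod 2] V →ₗ[ZMod 2] ZMod 2) (D : Set V) : Prop :=
  ∃ Q : V → ZMod 2, YieldsForm B Q ∧ (D = quadric Q ∨ D = (quadric Q)ᶜ)

open scoped Matrix

def sg (a : ZMod 2) : ℝ := (-1 : ℝ) ^ a.val

lemma sg_add (a b : ZMod 2) : sg (a + b) = sg a * sg b := by
  have h : ∀ a b : ZMod 2, (a + b).val = (a.val + b.val) % 2 := by decide
  unfold sg
  rw [h, ← neg_one_pow_eq_pow_mod_two, pow_add]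

lemma sg_zero : sg 0 = 1 := by simp [sg]

lemma sg_one : sg 1 = -1 := by simp [sg, ZMod.val_one]

lemma sg_sq (a : ZMod 2) : sg a * sg a = 1 := by
  rw [← sg_add, CharTwo.add_self_eq_zero, sg_zero]

lemma zmod2_cases (a : ZMod 2) : a = 0 ∨ a = 1 := by
  revert a; decide

lemma char_sum {V : Type*} [AddCommGroup V] [Module (ZMod 2) V] [Fintype V]
    (B : V →ₗ[ZMod 2] V →ₗ[ZMod 2] ZMod 2) (hB : IsSymplectic B) (z : V) (hz : z ≠ 0) :
    ∑ w, sg (B z w) = 0 := by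
  obtain ⟨w0, hw0⟩ := hB.2 z hz
  have h1 : B z w0 = 1 := (zmod2_cases _).resolve_left hw0
  have h2 := Equiv.sum_comp (Equiv.addRight w0) (fun w => sg (B z w))
  simp only [Equiv.coe_addRight, map_add, sg_add, h1, sg_one, mul_neg, mul_one,
    Finset.sum_neg_distrib] at h2
  linarith

lemma quad_sign {V : Type*} [AddCommGroup V] [Module (ZMod 2) V] [DecidableEq V]
    (B : V →ₗ[ZMod 2] V →ₗ[ZMod 2] ZMod 2) 
    (D : Finset V) (hD : IsAffineQuadric B (D : Set V)) :
    ∃ ε : ℝ, ε * ε = 1 ∧ ∀ x y : V, (if x + y ∈ D then (1 : ℝ) else -1) =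
      ε * (if x ∈ D then (1 : ℝ) else -1) * (if y ∈ D then (1 : ℝ) else -1) * sg (B x y) := by
  obtain ⟨Q, hQ, h⟩ := hD
  have key : ∀ x y, sg (Q (x + y)) = sg (Q x) * sg (Q y) * sg (B x y) := by
    intro x y
    rw [← hQ x y, sg_add, sg_add]
    linear_combination (-sg (Q (x+y)) * sg (Q y) * sg (Q y)) * sg_sq (Q x)
      - sg (Q (x + y)) * sg_sq (Q y)
  have h01 : (1 : ZMod 2) ≠ 0 := by decide
  rcases h with h | h
  · have hf : ∀ v, (if v ∈ D then (1 : ℝ) else -1) = sg (Q v) := by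
      intro v
      have hv : v ∈ D ↔ Q v = 0 := by
        rw [← Finset.mem_coe, h]; rfl
      rcases zmod2_cases (Q v) with h0 | h0 <;> simp [hv, h0, sg_zero, sg_one]
    refine ⟨1, by norm_num, fun x y => ?_⟩
    rw [hf, hf, hf, key]; ring
  · have hf : ∀ v, (if v ∈ D then (1 : ℝ) else -1) = -sg (Q v) := by
      intro v
      have hv : v ∈ D ↔ ¬ Q v = 0 := by
        rw [← Finset.mem_coe, h]; rfl
      rcases zmod2_cases (Q v) with h0 | h0 <;> simp [hv, h0, sg_zero, sg_one]
    refine ⟨-1, by norm_num, fun x y => ?_⟩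
    rw [hf, hf, hf, key]; ring

lemma B_symm {V : Type*} [AddCommGroup V] [Module (ZMod 2) V]
    (B : V →ₗ[ZMod 2] V →ₗ[ZMod 2] ZMod 2) (hB : IsSymplectic B) (x y : V) :
    B x y = B y x := by
  have h := hB.1 (x + y)
  simp only [map_add, LinearMap.add_apply, hB.1, zero_add, add_zero] at h
  generalize B x y = a at *
  generalize B y x = b at *
  revert a b; decide

lemma add_self_V {V : Type*} [AddCommGroup V] [Module (ZMod 2) V] (x : V) : x + x = 0 := by
  rw [← two_smul (ZMod 2) x, show (2 : ZMod 2) = 0 from by decide, zero_smul]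

lemma K_sq {J : ℕ} {V : Type*} [AddCommGroup V] [Module (ZMod 2) V] [Fintype V] [DecidableEq V]
    (hcard : (Fintype.card V : ℝ) = 2 ^ J * 2 ^ J)
    (B : V →ₗ[ZMod 2] V →ₗ[ZMod 2] ZMod 2) (hB : IsSymplectic B)
    (D : Finset V) (hD : IsAffineQuadric B (D : Set V))
    (hDcard : 2 * (D.card : ℝ) = 2 ^ J * (2 ^ J + 1)) (x y : V) (hx : x ∉ D) (hy : y ∉ D) :
    2 * ∑ w ∈ Dᶜ, sg (B x w) * sg (B w y) =
      (if x = y then 2 ^ J * 2 ^ J else 0) - 2 ^ J * sg (B x y) := by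
  obtain ⟨ε, hε, hf⟩ := quad_sign B D hD
  set f : V → ℝ := fun v => if v ∈ D then (1 : ℝ) else -1 with hfdef
  replace hf : ∀ x y, f (x + y) = ε * f x * f y * sg (B x y) := hf
  have hff : ∀ v, f v * f v = 1 := by
    intro v; simp only [hfdef]; split_ifs <;> norm_num
  have hfx : f x = -1 := by simp [hfdef, hx]
  have hfy : f y = -1 := by simp [hfdef, hy]
  have hsumf : ∑ v, f v = 2 ^ J := by
    have h1 : ∀ v, f v = 2 * (if v ∈ D then (1 : ℝ) else 0) - 1 := by
      intro v; simp only [hfdef]; split_ifs <;> norm_num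
    simp only [h1, Finset.sum_sub_distrib, ← Finset.mul_sum]
    simp [hcard]
    linarith
  have e1 : 2 * ∑ w ∈ Dᶜ, sg (B x w) * sg (B w y) =
      ∑ w, sg (B (x + y) w) - ∑ w, f w * sg (B (x + y) w) := by
    rw [← Finset.sum_sub_distrib, Finset.mul_sum,
      ← Finset.sum_subset (Finset.subset_univ Dᶜ)]
    · apply Finset.sum_congr rfl
      intro w hw
      have hw' : w ∉ D := by simpa using hw
      have : f w = -1 := by simp [hfdef, hw']
      rw [this, map_add, LinearMap.add_apply, sg_add, B_symm B hB w y]; ring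
    · intro w _ hw
      have hw' : w ∈ D := by simpa using hw
      have : f w = 1 := by simp [hfdef, hw']
      rw [this]; ring
  have e2 : ∑ w, f w * sg (B (x + y) w) = 2 ^ J * sg (B x y) := by
    have h1 : ∀ w, f w * sg (B (x + y) w) = sg (B x y) * f ((x + y) + w) := by
      intro w
      rw [hf (x + y) w, hf x y, hfx, hfy]
      linear_combination (-(f w) * sg (B (x+y) w)* sg (B x y) * sg (B x y)) * hε
        - f w * sg (B (x+y) w) * sg_sq (B x y)
    simp only [h1, ← Finset.mul_sum]
    have h2 := Equiv.sum_comp (Equiv.addLeft (x + y)) f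
    simp only [Equiv.coe_addLeft] at h2
    rw [h2, hsumf]; ring
  rw [e1, e2]
  congr 1
  split_ifs with hxy
  · subst hxy
    simp [add_self_V, sg_zero, hcard]
  · apply char_sum B hB
    intro h
    apply hxy
    have := add_self_V y
    exact add_right_cancel (h.trans this.symm)

lemma rank_of_sq {n : Type*} [Fintype n] [DecidableEq n] (G : Matrix n n ℝ) (a : ℝ) (ha : 0 < a)
    (hG : G * G = a • G) : a * (G.rank : ℝ) = G.trace := by
  have hp : (LinearMap.IsProj (LinearMap.range (Matrix.toLin' G)) (Matrix.toLin' (a⁻¹ • G))) := by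
    constructor
    · intro x
      refine ⟨a⁻¹ • x, ?_⟩
      simp
    · rintro _ ⟨x, rfl⟩
      rw [← LinearMap.comp_apply, ← Matrix.toLin'_mul, Matrix.smul_mul, hG, smul_smul,
        inv_mul_cancel₀ ha.ne', one_smul]
  have h := hp.trace
  rw [Matrix.trace_toLin'_eq, Matrix.trace_smul, Matrix.toLin'_apply'] at h
  change a⁻¹ • G.trace = (G.rank : ℝ) at h
  rw [← h, smul_eq_mul, mul_inv_cancel_left₀ ha.ne']

lemma exists_frame {n : Type*} [Fintype n] [DecidableEq n] (G : Matrix n n ℝ) (a : ℝ) (ha : 0 < a)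
    (hsymm : Gᵀ = G) (hG : G * G = a • G) (r : ℕ) (hr : G.rank = r) :
    ∃ φ : n → EuclideanSpace ℝ (Fin r), (∀ i j, (inner ℝ (φ i) (φ j) : ℝ) = G i j) ∧
      Submodule.span ℝ (Set.range φ) = ⊤ := by
  let c : ℝ := (Real.sqrt a)⁻¹
  have hc : c * c = a⁻¹ := by
    simp only [c]; rw [← mul_inv, Real.mul_self_sqrt ha.le]
  have hc0 : c ≠ 0 := inv_ne_zero (Real.sqrt_pos.2 ha).ne'
  let M : Matrix n n ℝ := c • G
  let ψ : n → EuclideanSpace ℝ n := fun i => WithLp.toLp 2 (M.col i)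
  have hψ : ∀ i j, (inner ℝ (ψ i) (ψ j) : ℝ) = G i j := by
    intro i j
    have h1 : (inner ℝ (ψ i) (ψ j) : ℝ) = (Mᵀ * M) i j := by
      simp [ψ, PiLp.inner_apply, Matrix.mul_apply, mul_comm]
    rw [h1]
    simp only [M, Matrix.transpose_smul, hsymm, Matrix.smul_mul, Matrix.mul_smul, hG, smul_smul, hc]
    rw [← mul_assoc, hc, inv_mul_cancel₀ ha.ne', one_smul]
  let W := Submodule.span ℝ (Set.range ψ)
  have hW : Module.finrank ℝ W = r := by
    have h1 : M.rank = r := by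
      rw [← hr]
      exact Matrix.rank_smul_of_mem_nonZeroDivisors _ (mem_nonZeroDivisors_of_ne_zero hc0)
    rw [← h1, Matrix.rank_eq_finrank_span_cols]
    rw [← LinearEquiv.finrank_map_eq (WithLp.linearEquiv 2 ℝ (n → ℝ)) W, Submodule.map_span,
      ← Set.range_comp]
    rfl
  let b := (stdOrthonormalBasis ℝ W).reindex (finCongr hW)
  refine ⟨fun i => b.repr ⟨ψ i, Submodule.subset_span ⟨i, rfl⟩⟩, ?_, ?_⟩
  · intro i j
    rw [LinearIsometryEquiv.inner_map_map, Submodule.coe_inner]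
    exact hψ i j
  · have h1 : (Set.range fun i => b.repr ⟨ψ i, Submodule.subset_span ⟨i, rfl⟩⟩) =
        b.repr.toLinearEquiv '' (((↑) : W → EuclideanSpace ℝ n) ⁻¹' (Set.range ψ)) := by
      ext z
      constructor
      · rintro ⟨i, rfl⟩
        exact ⟨_, ⟨i, rfl⟩, rfl⟩
      · rintro ⟨w, ⟨i, hi⟩, rfl⟩
        refine ⟨i, ?_⟩
        have : w = ⟨ψ i, Submodule.subset_span ⟨i, rfl⟩⟩ := Subtype.ext hi.symm
        rw [this]; rfl
    rw [h1]
    have h2 := Submodule.map_span b.repr.toLinearEquiv.toLinearMap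
      (((↑) : W → EuclideanSpace ℝ n) ⁻¹' (Set.range ψ))
    rw [Submodule.span_span_coe_preimage, Submodule.map_top, LinearEquiv.range] at h2
    exact h2.symm

/-- For an affine quadric `D` of size `2^{J−1}(2^J+1)`, the matrix
`G` indexed by `V∖D` with diagonal `2^J+1` and off-diagonal `(−1)^{B(v₁,v₂)}`
satisfies `G² = 3·2^{J−1}·G`, is positive semidefinite of rank `(2^{2J}−1)/3`,
and is the Gram matrix of an ETF of `2^{J−1}(2^J−1)` vectors for a real space of
dimension `(2^{2J}−1)/3`. -/
theorem gram_of_symplectic_sub_ETF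
    {J : ℕ} (hJ : 2 ≤ J)
    {V : Type*} [AddCommGroup V] [Module (ZMod 2) V] [Fintype V] [DecidableEq V]
    (hdim : Module.finrank (ZMod 2) V = 2 * J)
    (B : V →ₗ[ZMod 2] V →ₗ[ZMod 2] ZMod 2) (hB : IsSymplectic B)
    (D : Finset V) (hD : IsAffineQuadric B (D : Set V))
    (hDcard : D.card = 2 ^ (J - 1) * (2 ^ J + 1))
    (G : Matrix ↥(Dᶜ) ↥(Dᶜ) ℝ)
    (hGdiag : ∀ v, G v v = 2 ^ J + 1)
    (hGoff : ∀ v₁ v₂ : ↥(Dᶜ), v₁ ≠ v₂ → G v₁ v₂ = (-1 : ℝ) ^ (B v₁.1 v₂.1).val) :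
    G * G = ((3 * 2 ^ (J - 1) : ℝ)) • G ∧
    G.PosSemidef ∧
    G.rank = (2 ^ (2 * J) - 1) / 3 ∧
    ∃ φ : ↥(Dᶜ) → EuclideanSpace ℝ (Fin ((2 ^ (2 * J) - 1) / 3)),
      IsETF ℝ φ ∧
      (∀ v₁ v₂ : ↥(Dᶜ), (inner ℝ (φ v₁) (φ v₂) : ℝ) = G v₁ v₂) ∧
      Submodule.span ℝ (Set.range φ) = ⊤ := by
  obtain ⟨k, rfl⟩ : ∃ k, J = k + 1 := ⟨J - 1, by omega⟩
  simp only [Nat.add_sub_cancel] at *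
  have hcardN : Fintype.card V = 2 ^ (2 * (k + 1)) := by
    rw [Module.card_eq_pow_finrank (K := ZMod 2), ZMod.card, hdim]
  have hcard : (Fintype.card V : ℝ) = 2 ^ (k + 1) * 2 ^ (k + 1) := by
    rw [hcardN]; push_cast; ring
  have hDc : (D.card : ℝ) = 2 ^ k * (2 ^ (k + 1) + 1) := by
    rw [hDcard]; push_cast; ring
  have hD2 : 2 * (D.card : ℝ) = 2 ^ (k + 1) * (2 ^ (k + 1) + 1) := by
    rw [hDc]; ring
  have hEc : (Dᶜ.card : ℝ) = 2 ^ k * (2 ^ (k + 1) - 1) := by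
    have h := Finset.card_add_card_compl D
    have h' : (D.card : ℝ) + (Dᶜ.card : ℝ) = Fintype.card V := by exact_mod_cast h
    rw [hcard, hDc] at h'
    rw [pow_succ] at *
    linarith
  let K : Matrix ↥(Dᶜ) ↥(Dᶜ) ℝ := fun x y => sg (B x.1 y.1)
  have hK : ∀ x y, K x y = sg (B x.1 y.1) := fun _ _ => rfl
  have hGK : G = K + (2 ^ (k + 1) : ℝ) • (1 : Matrix ↥(Dᶜ) ↥(Dᶜ) ℝ) := by
    ext x y
    clear_value K
    by_cases h : x = y
    · subst h
      simp [hGdiag, hK, hB.1, sg_zero, add_comm]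
    · simp [hGoff x y h, hK, h, sg]
  have hKK : K * K = (2 * 2 ^ k * 2 ^ k : ℝ) • (1 : Matrix ↥(Dᶜ) ↥(Dᶜ) ℝ) - (2 ^ k : ℝ) • K := by
    ext x y
    have hx : x.1 ∉ D := Finset.mem_compl.1 x.2
    have hy : y.1 ∉ D := Finset.mem_compl.1 y.2
    have h := K_sq hcard B hB D hD hD2 x.1 y.1 hx hy
    rw [← Finset.sum_coe_sort] at h
    have h' : (K * K) x y = ∑ w : ↥(Dᶜ), sg (B x.1 w.1) * sg (B w.1 y.1) := rfl
    clear_value K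
    rw [← h'] at h
    by_cases hxy : x = y
    · subst hxy
      simp only [if_true, pow_succ] at h
      simp [hK]
      linarith
    · have hxy' : x.1 ≠ y.1 := fun h => hxy (Subtype.ext h)
      simp only [hxy', if_false, pow_succ] at h
      simp [hK, hxy]
      linarith
  have ha : (0 : ℝ) < 3 * 2 ^ k := by positivity
  have hsq : G * G = (3 * 2 ^ k : ℝ) • G := by
    rw [hGK]
    simp only [add_mul, mul_add, hKK, Matrix.smul_mul, Matrix.mul_smul, Matrix.mul_one,
      Matrix.one_mul]
    module
  have hsymm : Gᵀ = G := by
    rw [hGK]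
    ext x y
    clear_value K
    simp [hK, B_symm B hB y.1 x.1, Matrix.one_apply, eq_comm]
  have hrank : G.rank = (2 ^ (2 * (k + 1)) - 1) / 3 := by
    have h := rank_of_sq G _ ha hsq
    have ht : G.trace = 2 ^ k * (2 ^ (k + 1) - 1) * (2 ^ (k + 1) + 1) := by
      simp only [Matrix.trace, Matrix.diag, hGdiag]
      rw [Finset.sum_const, Finset.card_univ, Fintype.card_coe, nsmul_eq_mul, hEc]
    rw [ht] at h
    have h2 : (3 * G.rank + 1 : ℝ) = 2 ^ (2 * (k + 1)) := by
      have hk : (2 ^ k : ℝ) ≠ 0 := by positivity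
      apply mul_left_cancel₀ hk
      rw [pow_mul']
      linear_combination h
    have h3 : 3 * G.rank + 1 = 2 ^ (2 * (k + 1)) := by exact_mod_cast h2
    omega
  refine ⟨hsq, ?_, hrank, ?_⟩
  · have h1 : G = (3 * 2 ^ k : ℝ)⁻¹ • (Gᴴ * G) := by
      rw [Matrix.conjTranspose_eq_transpose_of_trivial, hsymm, hsq, smul_smul,
        inv_mul_cancel₀ ha.ne', one_smul]
    rw [h1]
    exact (Matrix.posSemidef_conjTranspose_mul_self G).smul (inv_nonneg.2 ha.le)
  · obtain ⟨φ, hφ, hspan⟩ := exists_frame G _ ha hsymm hsq _ hrank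
    refine ⟨φ, ⟨⟨2 ^ (k + 1) + 1, by positivity, fun n => ?_⟩, ⟨1, one_pos, fun i j hij => ?_⟩,
      ⟨3 * 2 ^ k, ha, fun i j => ?_⟩⟩, hφ, hspan⟩
    · rw [hφ, hGdiag]; simp
    · rw [hφ, hGoff i j hij]; simp
    · simp only [hφ]
      have := congrFun (congrFun hsq i) j
      simpa [Matrix.mul_apply] using this
end
end

section
/- Let B be a symplectic form on a 2J-dimensional vector space V over F_2 with J ≥ 2, and let D ⊆ V be an affine quadric with #D = 2^{J−1}(2^J+1). Define the real symmetric matrix H, with rows and columns indexed by D, by H(v,v) = 2^J − 1 and H(v₁,v₂) = −(−1)^{B(v₁,v₂)} for v₁ ≠ v₂ (the exponent being the value of B in F_2 = {0,1}). Then H² = 3·2^{J−1}·H; consequently H is positive semidefinite of rank (2^{2J}−1)/3, and H is the Gram matrix of an ETF of 2^{J−1}(2^J+1) vectors for a real inner product space of dimension (2^{2J}−1)/3. -/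
open scoped BigOperators

noncomputable section

lemma helper_gram {ι : Type*} [Fintype ι] [DecidableEq ι] (H : Matrix ι ι ℝ) (c : ℝ) (hc : 0 < c)
    (hsymm : ∀ i j, H i j = H j i) (hH : H * H = c • H) (r : ℕ) (htr : H.trace = c * r) :
    H.PosSemidef ∧ H.rank = r ∧ ∃ φ : ι → EuclideanSpace ℝ (Fin r),
      (∀ i j, (inner ℝ (φ i) (φ j) : ℝ) = H i j) ∧ Submodule.span ℝ (Set.range φ) = ⊤ := by
  have hT : H.conjTranspose = H := by
    ext i j
    simp [Matrix.conjTranspose_apply, hsymm i j]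
  have hpsd : H.PosSemidef := by
    have h1 : H = c⁻¹ • (H.conjTranspose * H) := by
      rw [hT, hH, smul_smul, inv_mul_cancel₀ hc.ne', one_smul]
    rw [h1]
    exact (Matrix.posSemidef_conjTranspose_mul_self H).smul (inv_pos.mpr hc).le
  have hrank : H.rank = r := by
    have hid : IsIdempotentElem (Matrix.toLin' (c⁻¹ • H)) := by
      unfold IsIdempotentElem
      rw [Module.End.mul_eq_comp, ← Matrix.toLin'_mul, Matrix.smul_mul, Matrix.mul_smul, hH, smul_smul c⁻¹ c,
        inv_mul_cancel₀ hc.ne', one_smul]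
    have h2 := (LinearMap.IsIdempotentElem.isProj_range _ hid).trace
    rw [Matrix.trace_toLin'_eq, Matrix.trace_smul, htr, smul_eq_mul, ← mul_assoc,
      inv_mul_cancel₀ hc.ne', one_mul] at h2
    have h3 : (c⁻¹ • H).rank = r := by
      rw [Matrix.rank, ← Matrix.toLin'_apply']
      exact_mod_cast h2.symm
    rw [← h3]
    apply le_antisymm
    · have h4 : H = (c⁻¹ • H) * (c • (1 : Matrix ι ι ℝ)) := by
        rw [Matrix.mul_smul, Matrix.mul_one, smul_smul, mul_inv_cancel₀ hc.ne', one_smul]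
      conv_lhs => rw [h4]
      exact Matrix.rank_mul_le_left _ _
    · have h4 : c⁻¹ • H = H * (c⁻¹ • (1 : Matrix ι ι ℝ)) := by
        rw [Matrix.mul_smul, Matrix.mul_one]
      rw [h4]
      exact Matrix.rank_mul_le_left _ _
  refine ⟨hpsd, hrank, ?_⟩
  let ψ : ι → EuclideanSpace ℝ ι := fun i => WithLp.toLp 2 (H.col i)
  let U := Submodule.span ℝ (Set.range ψ)
  have hU : Module.finrank ℝ U = r := by
    rw [← hrank, Matrix.rank_eq_finrank_span_cols]
    have : Submodule.span ℝ (Set.range H.col) =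
        U.map (WithLp.linearEquiv 2 ℝ (ι → ℝ)).toLinearMap := by
      rw [Submodule.map_span, ← Set.range_comp]
      rfl
    rw [this]
    exact (LinearEquiv.finrank_map_eq (WithLp.linearEquiv 2 ℝ (ι → ℝ)) U).symm
  let L : U ≃ₗᵢ[ℝ] EuclideanSpace ℝ (Fin r) :=
    ((stdOrthonormalBasis ℝ U).reindex (finCongr hU)).repr
  let ψ' : ι → U := fun i => ⟨ψ i, Submodule.subset_span ⟨i, rfl⟩⟩
  have hs : (√c)⁻¹ * (√c)⁻¹ = c⁻¹ := by
    rw [← mul_inv, Real.mul_self_sqrt hc.le]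
  refine ⟨fun i => (√c)⁻¹ • L (ψ' i), ?_, ?_⟩
  · intro i j
    rw [real_inner_smul_left, real_inner_smul_right, ← mul_assoc, hs, L.inner_map_map]
    have h4 : (inner ℝ (ψ' i) (ψ' j) : ℝ) = (H * H) i j := by
      change (inner ℝ (ψ i) (ψ j) : ℝ) = (H * H) i j
      simp only [PiLp.inner_apply, Matrix.mul_apply]
      refine Finset.sum_congr rfl fun k _ => ?_
      simp [ψ, Matrix.col_apply, hsymm i k, mul_comm]
    rw [h4, hH, Matrix.smul_apply, smul_eq_mul, ← mul_assoc, inv_mul_cancel₀ hc.ne', one_mul]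
  · have h5 : Submodule.span ℝ (Set.range ψ') = ⊤ := by
      have := Submodule.span_span_coe_preimage (R := ℝ) (s := Set.range ψ)
      rw [← this]
      congr 1
      ext ⟨x, hx⟩
      simp [ψ', Subtype.ext_iff]
    have h6 : Submodule.span ℝ (Set.range (fun i => L (ψ' i))) = ⊤ := by
      have : Set.range (fun i => L (ψ' i)) = L.toLinearEquiv.toLinearMap '' Set.range ψ' := by
        rw [← Set.range_comp]; rfl
      rw [this, ← Submodule.map_span, h5, Submodule.map_top]
      exact LinearEquiv.range _
    rw [eq_top_iff, ← h6, Submodule.span_le]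
    rintro _ ⟨i, rfl⟩
    have h7 : L (ψ' i) = √c • ((√c)⁻¹ • L (ψ' i)) := by
      rw [smul_smul, mul_inv_cancel₀ (Real.sqrt_pos.mpr hc).ne', one_smul]
    show L (ψ' i) ∈ _
    rw [h7]
    exact Submodule.smul_mem _ _ (Submodule.subset_span ⟨i, rfl⟩)

lemma chi_add (x y : ZMod 2) : (-1 : ℝ) ^ (x + y).val = (-1) ^ x.val * (-1) ^ y.val := by
  have h : (x + y).val % 2 = (x.val + y.val) % 2 := by
    revert x y; decide
  rw [← pow_add, neg_one_pow_eq_pow_mod_two, h, ← neg_one_pow_eq_pow_mod_two]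

lemma chi_sum {V : Type*} [AddCommGroup V] [Module (ZMod 2) V] [Fintype V]
    (B : V →ₗ[ZMod 2] V →ₗ[ZMod 2] ZMod 2) (hB : IsSymplectic B) (w : V) (hw : w ≠ 0) :
    ∑ u, (-1 : ℝ) ^ (B w u).val = 0 := by
  obtain ⟨u0, hu0⟩ := hB.2 w hw
  have h1 : B w u0 = 1 := by
    revert hu0
    generalize B w u0 = x
    revert x; decide
  have h2 : ∑ u, (-1 : ℝ) ^ (B w u).val = ∑ u, (-1 : ℝ) ^ (B w (u + u0)).val :=
    (Equiv.sum_comp (Equiv.addRight u0) (fun u => (-1 : ℝ) ^ (B w u).val)).symm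
  simp only [map_add, chi_add, h1] at h2
  rw [← Finset.sum_mul] at h2
  have : (1 : ZMod 2).val = 1 := rfl
  rw [this] at h2
  linarith

/-- The key identity. -/
lemma key_sum {J : ℕ} (hJ : 2 ≤ J)
    {V : Type*} [AddCommGroup V] [Module (ZMod 2) V] [Fintype V] [DecidableEq V]
    (hdim : Module.finrank (ZMod 2) V = 2 * J)
    (B : V →ₗ[ZMod 2] V →ₗ[ZMod 2] ZMod 2) (hB : IsSymplectic B)
    (D : Finset V) (hD : IsAffineQuadric B (D : Set V))
    (hDcard : D.card = 2 ^ (J - 1) * (2 ^ J + 1)) (v w : V) (hv : v ∈ D) (hw : w ∈ D) :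
    2 * ∑ u ∈ D, (-1 : ℝ) ^ (B v u).val * (-1 : ℝ) ^ (B w u).val =
      (if v = w then 2 ^ (2 * J) else 0) + 2 ^ J * (-1) ^ (B v w).val := by
  obtain ⟨Q, hQ, hDQ⟩ := hD
  have hcard : (Fintype.card V : ℝ) = 2 ^ (2 * J) := by
    have := Module.card_eq_pow_finrank (K := ZMod 2) (V := V)
    rw [hdim, ZMod.card] at this
    exact_mod_cast this
  have hself : ∀ x : ZMod 2, x + x = 0 := by decide
  have hvself : ∀ x : V, x + x = 0 := fun x => by
    rw [← two_smul (ZMod 2) x, show (2 : ZMod 2) = 0 from rfl, zero_smul]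
  have hQadd : ∀ x y, Q (x + y) = Q x + Q y + B x y := by
    intro x y
    rw [← hQ x y]
    generalize Q (x + y) = a
    generalize Q x = b
    generalize Q y = c
    revert a b c; decide
  -- indicator
  obtain ⟨e, hQe, hind⟩ : ∃ e : ℝ, (∀ x ∈ D, ∀ y ∈ D, Q x = Q y) ∧
      ∀ u, (if u ∈ D then (2 : ℝ) else 0) = 1 + e * (-1) ^ (Q u).val := by
    have h01 : ∀ x : ZMod 2, x ≠ 0 → x = 1 := by decide
    rcases hDQ with h | h
    · have hm : ∀ u, u ∈ D ↔ Q u = 0 := fun u => by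
        rw [← Finset.mem_coe, h]; rfl
      refine ⟨1, fun x hx y hy => by rw [(hm x).1 hx, (hm y).1 hy], fun u => ?_⟩
      by_cases hu : Q u = 0
      · rw [if_pos ((hm u).2 hu), hu]; norm_num
      · rw [if_neg (fun h => hu ((hm u).1 h)), h01 _ hu, show (1 : ZMod 2).val = 1 from rfl]
        norm_num
    · have hm : ∀ u, u ∈ D ↔ Q u ≠ 0 := fun u => by
        rw [← Finset.mem_coe, h]; rfl
      refine ⟨-1, fun x hx y hy => by rw [h01 _ ((hm x).1 hx), h01 _ ((hm y).1 hy)], fun u => ?_⟩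
      by_cases hu : Q u = 0
      · rw [if_neg (fun h => (hm u).1 h hu), hu]; norm_num
      · rw [if_pos ((hm u).2 hu), h01 _ hu, show (1 : ZMod 2).val = 1 from rfl]
        norm_num
  have hsumD : ∀ f : V → ℝ, 2 * ∑ u ∈ D, f u = ∑ u, f u + e * ∑ u, (-1) ^ (Q u).val * f u := by
    intro f
    have : ∀ u, (if u ∈ D then 2 * f u else 0) = f u + e * ((-1) ^ (Q u).val * f u) := by
      intro u
      have := congrArg (· * f u) (hind u)
      simp only [ite_mul, zero_mul] at this
      rw [this]; ring
    rw [Finset.mul_sum, Finset.mul_sum, ← Finset.sum_add_distrib, ← Finset.sum_congr rfl (fun u _ => this u),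
      Finset.sum_ite_mem, Finset.univ_inter]
  have hG : e * ∑ u, (-1 : ℝ) ^ (Q u).val = 2 ^ J := by
    have h := hsumD (fun _ => 1)
    simp only [Finset.sum_const, nsmul_eq_mul, mul_one, Finset.card_univ, hcard, hDcard] at h
    obtain ⟨k, rfl⟩ : ∃ k, J = k + 1 := ⟨J - 1, by omega⟩
    simp only [Nat.add_sub_cancel] at h
    push_cast at h
    have h8 : (2 : ℝ) ^ (2 * (k + 1)) = 2 ^ (k + 1) * 2 ^ (k + 1) := by rw [← pow_add]; congr 1; ring
    rw [h8] at h
    have h9 : (2 : ℝ) ^ (k + 1) = 2 * 2 ^ k := by ring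
    rw [h9] at h ⊢
    linarith
  have hcomb : ∀ u, (-1 : ℝ) ^ (B v u).val * (-1 : ℝ) ^ (B w u).val = (-1) ^ (B (v + w) u).val := by
    intro u
    rw [← chi_add, map_add, LinearMap.add_apply]
  simp only [hcomb]
  rw [hsumD]
  congr 1
  · split_ifs with hvw
    · subst hvw
      simp [hvself, hcard]
    · refine chi_sum B hB _ fun h => hvw ?_
      have := congrArg (· + w) h
      simpa [add_assoc, hvself] using this
  · have h10 : ∀ u, (-1 : ℝ) ^ (Q u).val * (-1) ^ (B (v + w) u).val =
        (-1) ^ (B v w).val * (-1) ^ (Q ((v + w) + u)).val := by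
      intro u
      rw [← chi_add, ← chi_add, hQadd (v + w) u, hQadd v w, hQe v hv w hw]
      congr 2
      generalize Q u = a
      generalize B (v + w) u = b
      generalize B v w = c
      generalize Q w = d
      revert a b c d; decide
    simp only [h10]
    have h11 : ∑ u, (-1 : ℝ) ^ (Q ((v + w) + u)).val = ∑ u, (-1 : ℝ) ^ (Q u).val :=
      Equiv.sum_comp (Equiv.addLeft (v + w)) (fun u => (-1 : ℝ) ^ (Q u).val)
    rw [← Finset.mul_sum, h11, ← hG]
    ring

/-- For an affine quadric `D` of size `2^{J−1}(2^J+1)`, the matrix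
`H` indexed by `D` with diagonal `2^J−1` and off-diagonal `−(−1)^{B(v₁,v₂)}`
satisfies `H² = 3·2^{J−1}·H`, is positive semidefinite of rank `(2^{2J}−1)/3`,
and is the Gram matrix of an ETF of `2^{J−1}(2^J+1)` vectors for a real space of
dimension `(2^{2J}−1)/3`. -/
theorem gram_of_symplectic_dual_sub_ETF
    {J : ℕ} (hJ : 2 ≤ J)
    {V : Type*} [AddCommGroup V] [Module (ZMod 2) V] [Fintype V] [DecidableEq V]
    (hdim : Module.finrank (ZMod 2) V = 2 * J)
    (B : V →ₗ[ZMod 2] V →ₗ[ZMod 2] ZMod 2) (hB : IsSymplectic B)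
    (D : Finset V) (hD : IsAffineQuadric B (D : Set V))
    (hDcard : D.card = 2 ^ (J - 1) * (2 ^ J + 1))
    (H : Matrix ↥D ↥D ℝ)
    (hHdiag : ∀ v, H v v = 2 ^ J - 1)
    (hHoff : ∀ v₁ v₂ : ↥D, v₁ ≠ v₂ → H v₁ v₂ = -(-1 : ℝ) ^ (B v₁.1 v₂.1).val) :
    H * H = ((3 * 2 ^ (J - 1) : ℝ)) • H ∧
    H.PosSemidef ∧
    H.rank = (2 ^ (2 * J) - 1) / 3 ∧
    ∃ φ : ↥D → EuclideanSpace ℝ (Fin ((2 ^ (2 * J) - 1) / 3)),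
      IsETF ℝ φ ∧
      (∀ v₁ v₂ : ↥D, (inner ℝ (φ v₁) (φ v₂) : ℝ) = H v₁ v₂) ∧
      Submodule.span ℝ (Set.range φ) = ⊤ := by
  have hBsymm : ∀ x y, B x y = B y x := by
    intro x y
    have h := hB.1 (x + y)
    simp only [map_add, LinearMap.add_apply, hB.1] at h
    revert h
    generalize B x y = a
    generalize B y x = b
    revert a b; decide
  have hsymm : ∀ i j, H i j = H j i := by
    intro i j
    by_cases h : i = j
    · rw [h]
    · rw [hHoff i j h, hHoff j i (Ne.symm h), hBsymm]
  have hHf : ∀ i j : ↥D, H i j = (if i = j then (2 : ℝ) ^ J else 0) - (-1 : ℝ) ^ (B i.1 j.1).val := by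
    intro i j
    split_ifs with h
    · subst h
      rw [hHdiag, hB.1]; norm_num
    · rw [hHoff i j h]; ring
  have hJ2 : (2 : ℝ) ^ J = 2 * 2 ^ (J - 1) := by
    rw [← pow_succ']; congr 1; omega
  have hJ3 : (2 : ℝ) ^ (2 * J) = 2 ^ J * 2 ^ J := by rw [← pow_add]; congr 1; ring
  have hHH : H * H = ((3 * 2 ^ (J - 1) : ℝ)) • H := by
    ext i j
    have hk := key_sum hJ hdim B hB D hD hDcard i.1 j.1 i.2 j.2
    rw [← Finset.sum_coe_sort D (fun u => (-1 : ℝ) ^ (B i.1 u).val * (-1 : ℝ) ^ (B j.1 u).val)] at hk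
    rw [Matrix.mul_apply, Matrix.smul_apply, smul_eq_mul, hHf i j]
    have hterm : ∀ k : ↥D, H i k * H k j =
        (if i = k then (2 : ℝ) ^ J * H k j else 0)
        - (if k = j then (2 : ℝ) ^ J * (-1 : ℝ) ^ (B i.1 k.1).val else 0)
        + (-1 : ℝ) ^ (B i.1 k.1).val * (-1 : ℝ) ^ (B j.1 k.1).val := by
      intro k
      rw [hHf i k, hHf k j, hBsymm k.1 j.1]
      split_ifs <;> ring
    rw [Finset.sum_congr rfl (fun k _ => hterm k), Finset.sum_add_distrib, Finset.sum_sub_distrib,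
      Finset.sum_ite_eq, Finset.sum_ite_eq']
    simp only [Finset.mem_univ, if_true]
    rw [hHf i j]
    simp only [Subtype.ext_iff]
    rw [hJ3, hJ2] at hk
    rw [hJ2]
    split_ifs at hk ⊢ <;> linarith
  have hdvd : 3 * ((2 ^ (2 * J) - 1) / 3) = 2 ^ (2 * J) - 1 := by
    apply Nat.mul_div_cancel'
    have := Nat.sub_dvd_pow_sub_pow 4 1 J
    rw [pow_mul]
    simpa using this
  have htr : H.trace = (3 * 2 ^ (J - 1) : ℝ) * ((2 ^ (2 * J) - 1) / 3 : ℕ) := by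
    have h3 : (3 : ℝ) * ((2 ^ (2 * J) - 1) / 3 : ℕ) = 2 ^ (2 * J) - 1 := by
      have := congrArg (Nat.cast : ℕ → ℝ) hdvd
      rw [Nat.cast_sub Nat.one_le_two_pow] at this
      push_cast at this ⊢
      exact this
    rw [mul_right_comm, h3]
    simp only [Matrix.trace, Matrix.diag_apply, hHdiag, Finset.sum_const, Finset.card_univ,
      Fintype.card_coe, hDcard, nsmul_eq_mul]
    push_cast
    rw [hJ3]; ring
  have hpos : (0 : ℝ) < 3 * 2 ^ (J - 1) := by positivity
  obtain ⟨h1, h2, φ, h3, h4⟩ := helper_gram H _ hpos hsymm hHH _ htr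
  refine ⟨hHH, h1, h2, φ, ⟨⟨2 ^ J - 1, ?_, fun n => ?_⟩, ⟨1, one_pos, fun i j hij => ?_⟩,
    ⟨3 * 2 ^ (J - 1), hpos, fun i j => ?_⟩⟩, h3, h4⟩
  · have : (1 : ℝ) < 2 ^ J := one_lt_pow₀ (by norm_num) (by omega)
    linarith
  · rw [h3, hHdiag]; simp
  · rw [h3, hHoff i j hij]; simp
  · simp only [h3]
    have := congrFun (congrFun hHH i) j
    rw [Matrix.mul_apply, Matrix.smul_apply, smul_eq_mul] at this
    rw [this]; simp
end
end
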